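/- arXiv:2504.14198 — 8 statements merged into one kernel-verified Lean document; each statement's English description precedes it below -/
import Mathlib

section
/- Let F be a field with char(F) ≠ 2, let n ≥ 2, and let T : M_n(F) → M_n(F) be a bijective linear map. Then T(D_n) ⊆ D_n if and only if there exist invertible matrices P, Q ∈ M_n(F) with det(PQ) ∈ {−1, 1} such that either T(X) = P·X·Q for all X ∈ M_n(F), or T(X) = P·Xᵗ·Q for all X ∈ M_n(F). -/
open Matrix

/-- The set of matrices that are products of four involutions. -/
def ProdInv4 (F : Type*) [Field F] (n : ℕ) : Set (Matrix (Fin n) (Fin n) F) :=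
  {A | ∃ J₁ J₂ J₃ J₄ : Matrix (Fin n) (Fin n) F,
    J₁ * J₁ = 1 ∧ J₂ * J₂ = 1 ∧ J₃ * J₃ = 1 ∧ J₄ * J₄ = 1 ∧ A = J₁ * J₂ * J₃ * J₄}

/-!
A matrix is a product of four involutions if and only if its determinant is `±1`. For the
nontrivial direction, a scalar matrix `c` with `c ^ n = ±1` is the product of the diagonal matrices
of the odd powers of `c` and of the powers of `c⁻²`, and the spectrum of each is matched with its
inverse by an involution of the indices. A nonscalar matrix is a product `A * B` whose factors have
all eigenvalues `1`, except for at most one eigenvalue `-1` of `B`, by Sourour's argument: in a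
suitable basis the top left entry is `1` and the Schur complement, if larger than `1 × 1`, is again
nonscalar, so one can recurse. A matrix annihilated by a power of `X ^ 2 - 1` is a product of two
involutions.

A linear bijection preserving the set `det ^ 2 = 1` therefore preserves it in both directions: it
maps a Zariski closed set into itself, so Dixon's lemma applies. The matrices of rank at most one
can be recognised from this set, as the directions `N` for which every line `t ↦ X + t • N` through
one of its points either lies in it or meets it in exactly two points. Hence the bijection preserves
rank at most one, and such maps have the form `X ↦ P * X * Q` or `X ↦ P * Xᵀ * Q`.
-/

open Polynomial Module DirectSum

/-- `a` is a product of two involutions; a group element with this property is called strongly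
reversible. The matrices with this property form the set usually written `B_n`. -/
def IsStronglyReversible {M : Type*} [Monoid M] (a : M) : Prop :=
  ∃ J K : M, J * J = 1 ∧ K * K = 1 ∧ a = J * K

namespace IsStronglyReversible

theorem map {M N G : Type*} [Monoid M] [Monoid N] [FunLike G M N] [MonoidHomClass G M N]
    (f : G) {a : M} (ha : IsStronglyReversible a) : IsStronglyReversible (f a) := by
  obtain ⟨J, K, hJ, hK, rfl⟩ := ha
  exact ⟨f J, f K, by rw [← map_mul, hJ, map_one], by rw [← map_mul, hK, map_one], map_mul f J K⟩

theorem lmap {R ι : Type*} [Semiring R] {M : ι → Type*} [∀ i, AddCommMonoid (M i)]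
    [∀ i, Module R (M i)] {f : ∀ i, Module.End R (M i)} (hf : ∀ i, IsStronglyReversible (f i)) :
    IsStronglyReversible (M := Module.End R (⨁ i, M i)) (DirectSum.lmap f) := by
  choose J K hJ hK h using hf
  refine ⟨DirectSum.lmap J, DirectSum.lmap K, ?_, ?_, ?_⟩
  · exact (DirectSum.lmap_comp J J).symm.trans
      ((congrArg DirectSum.lmap (funext hJ)).trans DirectSum.lmap_id)
  · exact (DirectSum.lmap_comp K K).symm.trans
      ((congrArg DirectSum.lmap (funext hK)).trans DirectSum.lmap_id)
  · exact (congrArg DirectSum.lmap (funext h)).trans (DirectSum.lmap_comp K J)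

end IsStronglyReversible

section Unipotent

theorem isStronglyReversible_mulLeft {F R : Type*} [CommSemiring F] [CommSemiring R] [Algebra F R]
    {x : R} {τ : R →ₐ[F] R} (hτ : Function.Involutive τ) (hx : τ x * x = 1) :
    IsStronglyReversible (LinearMap.mulLeft F x) := by
  refine ⟨τ.toLinearMap, τ.toLinearMap ∘ₗ LinearMap.mulLeft F x, ?_, ?_, ?_⟩ <;> ext z
  · simp [hτ z]
  · simp only [Module.End.mul_apply, LinearMap.comp_apply, AlgHom.toLinearMap_apply,
      LinearMap.mulLeft_apply, map_mul, hτ z, Module.End.one_apply, ← mul_assoc, hτ x]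
    rw [hx, one_mul]
  · simp [hτ x, hτ z]

variable {F : Type*} [Field F]

/-- In the local ring `F[X] ⧸ ((X - c) ^ e)` the class of `X` is a unit, and inverting it extends
to an algebra automorphism. -/
theorem isStronglyReversible_mulLeft_mk_X {c : F} (hc : c * c = 1) {e : ℕ} {I : Ideal F[X]}
    (hI : I = Ideal.span {(X - C c) ^ e}) :
    IsStronglyReversible (LinearMap.mulLeft F (Ideal.Quotient.mk I X)) := by
  set x : F[X] ⧸ I := Ideal.Quotient.mk I X with hx
  have hxe : (x - algebraMap F _ c) ^ e = 0 := by
    have : Ideal.Quotient.mk I ((X - C c) ^ e) = 0 :=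
      Ideal.Quotient.eq_zero_iff_mem.2 (hI ▸ Ideal.mem_span_singleton_self _)
    rwa [map_pow, map_sub] at this
  have hcc : algebraMap F (F[X] ⧸ I) c * algebraMap F (F[X] ⧸ I) c = 1 := by
    rw [← map_mul, hc, map_one]
  obtain ⟨y, hyx⟩ : ∃ y, y * x = 1 := by
    have hunit : IsUnit (x - algebraMap F _ c + algebraMap F _ c) :=
      ((show IsNilpotent (x - algebraMap F _ c) from ⟨e, hxe⟩).isUnit_add_right_of_commute
        (IsUnit.of_mul_eq_one _ hcc) (Commute.all _ _))
    rw [sub_add_cancel] at hunit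
    exact hunit.exists_left_inv
  have hy : ∀ p ∈ I, aeval y p = 0 := by
    intro p hp
    obtain ⟨q, rfl⟩ := Ideal.mem_span_singleton.1 (hI ▸ hp)
    have : y - algebraMap F _ c = -algebraMap F _ c * y * (x - algebraMap F _ c) := by
      linear_combination (algebraMap F _ c) * hyx - y * hcc
    simp [this, mul_pow, hxe]
  set τ : F[X] ⧸ I →ₐ[F] F[X] ⧸ I := Ideal.Quotient.liftₐ I (aeval y) hy
  have hτx : τ x = y := (Ideal.Quotient.lift_mk I _ hy).trans (aeval_X y)
  have hτy : τ y = x := by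
    have : τ y * y = 1 := by rw [← hτx, ← map_mul, hτx, hyx, map_one]
    exact left_inv_eq_right_inv this hyx
  refine isStronglyReversible_mulLeft (τ := τ) (fun z ↦ ?_) (by rw [hτx, hyx])
  obtain ⟨p, rfl⟩ := Ideal.Quotient.mk_surjective z
  have : τ.comp (τ.comp (Ideal.Quotient.mkₐ F I)) = Ideal.Quotient.mkₐ F I :=
    Polynomial.algHom_ext (by simp [← hx, hτx, hτy])
  exact DFunLike.congr_fun this p

theorem associated_X_sub_C_of_dvd {p : F[X]} (hp : Irreducible p) {k : ℕ}
    (h : p ∣ ((X ^ 2 - 1) ^ k : F[X])) : ∃ c : F, c * c = 1 ∧ Associated p (X - C c) := by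
  have hfac : (X ^ 2 - 1 : F[X]) = (X - C 1) * (X - C (-1)) := by
    rw [C_1, C_neg, C_1]
    ring
  rcases hp.prime.dvd_or_dvd (hfac ▸ hp.prime.dvd_of_dvd_pow h) with h | h
  · exact ⟨1, by simp, hp.associated_of_dvd (irreducible_X_sub_C _) h⟩
  · exact ⟨-1, by simp, hp.associated_of_dvd (irreducible_X_sub_C _) h⟩

theorem isStronglyReversible_mulLeft_mk_X_of_dvd {p : F[X]} (hp : Irreducible p) {e k : ℕ}
    (h : p ^ e ∣ ((X ^ 2 - 1) ^ k : F[X])) :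
    IsStronglyReversible
      (LinearMap.mulLeft F (Ideal.Quotient.mk (Ideal.span {p ^ e}) X)) := by
  rcases eq_or_ne e 0 with rfl | he
  · exact isStronglyReversible_mulLeft_mk_X (mul_one (1 : F)) (e := 0) (by simp)
  · obtain ⟨c, hc, hpc⟩ := associated_X_sub_C_of_dvd hp ((dvd_pow_self p he).trans h)
    exact isStronglyReversible_mulLeft_mk_X hc
      (Ideal.span_singleton_eq_span_singleton.2 (hpc.pow_pow (n := e)))

theorem isStronglyReversible_of_aeval_eq_zero {V : Type*} [AddCommGroup V] [Module F V]
    [FiniteDimensional F V] {T : Module.End F V} {k : ℕ}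
    (hT : aeval T ((X ^ 2 - 1) ^ k : F[X]) = 0) : IsStronglyReversible T := by
  obtain ⟨ι, _, p, hp, e, ⟨φ⟩⟩ := Module.equiv_directSum_of_isTorsion
    (Module.AEval.isTorsion_of_finiteDimensional F V T)
  have hann (z : ⨁ i, F[X] ⧸ F[X] ∙ p i ^ e i) : ((X ^ 2 - 1) ^ k : F[X]) • z = 0 := by
    obtain ⟨v, rfl⟩ := ((Module.AEval'.of T).toEquiv.trans φ.toEquiv).surjective z
    change _ • φ (Module.AEval'.of T v) = 0
    rw [← map_smul, ← Module.AEval.of_aeval_smul, hT, zero_smul, map_zero, map_zero]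
  have hdvd (i : ι) : p i ^ e i ∣ ((X ^ 2 - 1) ^ k : F[X]) := by
    classical
    have h := congrArg (DirectSum.component F[X] ι (fun i ↦ F[X] ⧸ F[X] ∙ p i ^ e i) i)
      (hann (DirectSum.lof F[X] ι (fun i ↦ F[X] ⧸ F[X] ∙ p i ^ e i) i (Ideal.Quotient.mk _ 1)))
    rw [← map_smul, DirectSum.component.lof_self, map_zero] at h
    rw [← Ideal.mem_span_singleton, ← Ideal.Quotient.eq_zero_iff_mem]
    rwa [← mul_one ((X ^ 2 - 1) ^ k)]
  let ψ : V ≃ₗ[F] ⨁ i, F[X] ⧸ F[X] ∙ p i ^ e i :=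
    (Module.AEval'.of T).trans (φ.restrictScalars F)
  have hψ : T = ψ.symm.conjRingEquiv
      (DirectSum.lmap fun i ↦
        LinearMap.mulLeft F (Ideal.Quotient.mk (Ideal.span {p i ^ e i}) X)) := by
    ext v
    apply ψ.injective
    change φ (Module.AEval'.of T (T v)) = ψ (ψ.symm _)
    rw [← Module.AEval'.X_smul_of, map_smul, LinearEquiv.apply_symm_apply]
    rfl
  rw [hψ]
  exact (IsStronglyReversible.lmap fun i ↦
    isStronglyReversible_mulLeft_mk_X_of_dvd (hp i) (hdvd i)).map ψ.symm.conjRingEquiv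

end Unipotent

section Scalar

theorem isStronglyReversible_diagonal {R ι : Type*} [Semiring R] [Fintype ι] [DecidableEq ι]
    {d : ι → R} {σ : Equiv.Perm ι} (hσ : Function.Involutive σ) (hd : ∀ i, d i * d (σ i) = 1) :
    IsStronglyReversible (diagonal d) := by
  have hσ_symm : σ.symm = σ := Equiv.ext fun i ↦ σ.symm_apply_eq.2 (hσ i).symm
  have hσσ : σ.permMatrix R * σ.permMatrix R = 1 := by
    rw [← permMatrix_mul, show σ * σ = 1 from Equiv.ext hσ, permMatrix_one]
  have hconj : σ.permMatrix R * diagonal d * σ.permMatrix R = diagonal (d ∘ σ) := by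
    rw [PEquiv.toMatrix_toPEquiv_mul, PEquiv.mul_toMatrix_toPEquiv, submatrix_submatrix, hσ_symm]
    exact submatrix_diagonal_equiv d σ
  refine ⟨diagonal d * σ.permMatrix R, σ.permMatrix R, ?_, hσσ, ?_⟩
  · rw [Matrix.mul_assoc, ← Matrix.mul_assoc (σ.permMatrix R), hconj, diagonal_mul_diagonal]
    exact (congrArg diagonal (funext hd)).trans diagonal_one
  · rw [Matrix.mul_assoc, hσσ, Matrix.mul_one]

theorem isStronglyReversible_diagonal_odd_pow {R : Type*} [Semiring R] {n : ℕ} {c : R}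
    (hc : c ^ (2 * n) = 1) :
    IsStronglyReversible (diagonal fun i : Fin n ↦ c ^ (2 * (i : ℕ) + 1)) := by
  refine isStronglyReversible_diagonal (σ := Fin.revPerm) Fin.rev_involutive fun i ↦ ?_
  rw [Fin.revPerm_apply, Fin.val_rev, ← pow_add, ← hc]
  congr 1
  omega

theorem isStronglyReversible_diagonal_pow {R : Type*} [Semiring R] {n : ℕ} {c : R}
    (hc : c ^ n = 1) : IsStronglyReversible (diagonal fun i : Fin n ↦ c ^ (i : ℕ)) := by
  rcases n with _ | n
  · exact ⟨1, 1, mul_one 1, mul_one 1, Subsingleton.elim _ _⟩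
  refine isStronglyReversible_diagonal (σ := Equiv.neg _) neg_involutive fun i ↦ ?_
  rw [Equiv.neg_apply, Fin.val_neg, ← pow_add]
  split_ifs with hi
  · simp [hi]
  · rw [← hc, Nat.add_sub_cancel' i.is_lt.le]

theorem exists_isStronglyReversible_mul_eq_scalar {F : Type*} [Field F] {n : ℕ} {c : F}
    (hc : c ^ (2 * n) = 1) : ∃ A B : Matrix (Fin n) (Fin n) F,
      IsStronglyReversible A ∧ IsStronglyReversible B ∧ scalar (Fin n) c = A * B := by
  have hc' : ((c ^ 2)⁻¹) ^ n = 1 := by rw [inv_pow, ← pow_mul, hc, inv_one]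
  refine ⟨_, _, isStronglyReversible_diagonal_odd_pow hc,
    isStronglyReversible_diagonal_pow hc', ?_⟩
  rw [diagonal_mul_diagonal, scalar_apply]
  refine congrArg diagonal (funext fun i ↦ ?_)
  have hc0 : c ≠ 0 := by
    rintro rfl
    simp [i.pos.ne'] at hc
  rw [pow_succ', pow_mul, inv_pow, mul_inv_cancel_right₀ (pow_ne_zero _ (pow_ne_zero _ hc0))]

end Scalar

section Factorization

variable {F V : Type*} [Field F] [AddCommGroup V] [Module F V]

theorem exists_notMem_span_pair_of_injective {T : End F V} (hT : Function.Injective T) {e : V}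
    (he : LinearIndependent F ![e, T e]) (hV : 2 < finrank F V) :
    ∃ u, u ∉ Submodule.span F {e, T e} ∧ T u ∉ Submodule.span F {u, T e} := by
  obtain ⟨u, hu⟩ : ∃ u, u ∉ Submodule.span F {e, T e} := by
    by_contra! h
    have h2 : finrank F (Submodule.span F {e, T e}) ≤ 2 := by
      classical exact_mod_cast (finrank_span_finset_le_card {e, T e}).trans Finset.card_le_two
    rw [(Submodule.eq_top_iff'.2 h : Submodule.span F {e, T e} = ⊤), finrank_top] at h2
    exact absurd h2 (not_le.2 hV)
  by_cases hTu : T u ∈ Submodule.span F {u, T e}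
  · refine ⟨u + e, fun h ↦ hu ?_, fun h ↦ hu ?_⟩
    · simpa using Submodule.sub_mem _ h (Submodule.mem_span_of_mem (Set.mem_insert e {T e}))
    · obtain ⟨a, b, hab⟩ := Submodule.mem_span_pair.1 hTu
      obtain ⟨a', b', hab'⟩ := Submodule.mem_span_pair.1 h
      rw [map_add, ← hab] at hab'
      have haa' : a - a' = 0 := by
        by_contra hne
        refine hu ((Submodule.smul_mem_iff _ hne).1 (Submodule.mem_span_pair.2
          ⟨a', b' - b - 1, ?_⟩))
        linear_combination (norm := module) hab'
      have ha' : a' = 0 := (LinearIndependent.pair_iff.1 he a' (b' - b - 1)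
        (by linear_combination (norm := module) hab' + haa' • u)).1
      have hub : T (b • e) = T u := by
        rw [map_smul, ← hab, sub_eq_zero.1 haa', ha', zero_smul, zero_add]
      rw [← hT hub]
      exact Submodule.smul_mem _ _ (Submodule.mem_span_of_mem (Set.mem_insert _ _))
  · exact ⟨u, hu, hTu⟩

theorem exists_dual_eq_one {e f u : V} (hef : LinearIndependent F ![e, f])
    (hu : u = 0 ∨ u ∉ Submodule.span F {e, f}) :
    ∃ φ : Dual F V, φ e = 1 ∧ φ f = 1 ∧ φ u = 0 := by
  have he : e ∉ Submodule.span F {u, f - e} := by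
    intro h
    obtain ⟨a, b, hab⟩ := Submodule.mem_span_pair.1 h
    have hau : a • u = 0 := by
      rcases hu with rfl | hu
      · exact smul_zero a
      · suffices a = 0 by rw [this, zero_smul]
        by_contra ha
        refine hu (Submodule.mem_span_pair.2 ⟨a⁻¹ * (1 + b), -(a⁻¹ * b), ?_⟩)
        rw [← inv_smul_smul₀ ha u, eq_sub_of_add_eq hab]
        module
    have h0 := LinearIndependent.pair_iff.1 hef (1 + b) (-b) (by
      linear_combination (norm := module) hau - hab)
    exact one_ne_zero (by linear_combination h0.1 + h0.2)
  obtain ⟨φ, hφe, hφ⟩ := Submodule.exists_le_ker_of_notMem he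
  have hφu : φ u = 0 := hφ (Submodule.mem_span_of_mem (Set.mem_insert _ _))
  have hφf : φ (f - e) = 0 := hφ (Submodule.mem_span_of_mem (Set.mem_insert_of_mem _ rfl))
  rw [map_sub, sub_eq_zero] at hφf
  exact ⟨(φ e)⁻¹ • φ, by simp [hφe], by simp [hφf, hφe], by simp [hφu]⟩

theorem exists_basis_coord_eq {φ : Dual F V} {e : V} (he : φ e = 1) {n : ℕ}
    (hV : finrank F V = n + 1) :
    ∃ b : Basis (Unit ⊕ Fin n) F V, b (.inl ()) = e ∧ b.coord (.inl ()) = φ := by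
  have hfin := Module.finite_of_finrank_pos (by omega : 0 < finrank F V)
  have he0 : e ≠ 0 := fun h ↦ one_ne_zero (by rw [← he, h, map_zero])
  have hφ0 : φ ≠ 0 := fun h ↦ one_ne_zero (by rw [← he, h, LinearMap.zero_apply])
  have hcompl : IsCompl (F ∙ e) (LinearMap.ker φ) := by
    refine (Dual.isCompl_ker_of_disjoint_of_ne_bot hφ0 ?_ (by simpa)).symm
    rw [Submodule.disjoint_span_singleton' he0, LinearMap.mem_ker, he]
    exact one_ne_zero
  have hker := Dual.finrank_ker_add_one_of_ne_zero hφ0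
  let bk : Basis (Fin n) F (LinearMap.ker φ) := finBasisOfFinrankEq F _ (by omega)
  let be : Basis Unit F (F ∙ e) :=
    (Basis.singleton Unit F).map (LinearEquiv.toSpanNonzeroSingleton F V e he0)
  let b := (be.prod bk).map (Submodule.prodEquivOfIsCompl _ _ hcompl)
  have hb : b (.inl ()) = e := by simp [b, be]
  refine ⟨b, hb, b.ext ?_⟩
  rintro (_ | j)
  · rw [hb, he, Basis.coord_apply, ← hb, Basis.repr_self, Finsupp.single_eq_same]
  · have : φ (b (.inr j)) = 0 := by simp [b]
    simp [this]

theorem apply_mem_span_pair_of_schur_eq_scalar {n : ℕ} {T : End F V} {b : Basis (Unit ⊕ Fin n) F V}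
    {r : Matrix Unit (Fin n) F} {c : Matrix (Fin n) Unit F} {D : Matrix (Fin n) (Fin n) F}
    (hb : LinearMap.toMatrix b b T = fromBlocks 1 r c D) {α : F} (hα : D - c * r = scalar _ α)
    {u : V} (hu : b.coord (.inl ()) u = 0) : T u ∈ Submodule.span F {u, T (b (.inl ()))} := by
  have hrepr (i j) : b.repr (T (b j)) i = fromBlocks 1 r c D i j := by
    rw [← hb, LinearMap.toMatrix_apply]
  have hcol (j : Fin n) : T (b (.inr j)) = α • b (.inr j) + r () j • T (b (.inl ())) := by
    refine b.ext_elem ?_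
    rintro (_ | i)
    · simp [hrepr]
    · have hij : D i j - c i () * r () j = if i = j then α else 0 := by
        simpa [mul_apply, diagonal_apply] using congrFun (congrFun hα i) j
      suffices D i j = (if i = j then α else 0) + r () j * c i () by
        simpa [hrepr, Finsupp.single_apply, eq_comm (a := j)]
      linear_combination hij
  obtain ⟨x, hx⟩ : ∃ x : Fin n → F, u = ∑ j, x j • b (.inr j) := by
    refine ⟨fun j ↦ b.repr u (.inr j), ?_⟩
    rw [Basis.coord_apply] at hu
    nth_rewrite 1 [← b.sum_repr u]
    simp only [Fintype.sum_sum_type, Finset.univ_unique, Finset.sum_singleton,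
      PUnit.default_eq_unit, hu, zero_smul, zero_add]
  refine Submodule.mem_span_pair.2 ⟨α, ∑ j, x j * r () j, ?_⟩
  simp only [hx, map_sum, map_smul, hcol, smul_add, Finset.sum_add_distrib, Finset.smul_sum,
    Finset.sum_smul, smul_smul, mul_comm α]

theorem exists_basis_toMatrix_eq_fromBlocks {T : End F V} (hT : Function.Injective T)
    (hs : ∀ c : F, T ≠ c • 1) {n : ℕ} (hV : finrank F V = n + 1) :
    ∃ (b : Basis (Unit ⊕ Fin n) F V) (r : Matrix Unit (Fin n) F) (c : Matrix (Fin n) Unit F)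
      (D : Matrix (Fin n) (Fin n) F), LinearMap.toMatrix b b T = fromBlocks 1 r c D ∧
        (n ≤ 1 ∨ ∀ α, D - c * r ≠ scalar _ α) := by
  obtain ⟨e, he⟩ : ∃ e, LinearIndependent F ![e, T e] := by
    by_contra! h
    obtain ⟨c, hc⟩ := LinearMap.exists_eq_smul_id_of_forall_notLinearIndependent h
    exact hs c hc
  obtain ⟨u, hu, hTu⟩ : ∃ u, (u = 0 ∨ u ∉ Submodule.span F {e, T e}) ∧
      (n ≤ 1 ∨ T u ∉ Submodule.span F {u, T e}) := by
    rcases le_or_gt n 1 with hn | hn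
    · exact ⟨0, .inl rfl, .inl hn⟩
    · obtain ⟨u, hu, hTu⟩ := exists_notMem_span_pair_of_injective hT he (by omega)
      exact ⟨u, .inr hu, .inr hTu⟩
  obtain ⟨φ, hφe, hφTe, hφu⟩ := exists_dual_eq_one he hu
  obtain ⟨b, rfl, rfl⟩ := exists_basis_coord_eq hφe hV
  have hblock := fromBlocks_toBlocks (LinearMap.toMatrix b b T)
  have h11 : (LinearMap.toMatrix b b T).toBlocks₁₁ = 1 := by
    ext
    simpa [toBlocks₁₁, LinearMap.toMatrix_apply] using hφTe
  rw [h11] at hblock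
  exact ⟨b, _, _, _, hblock.symm, hTu.imp_right fun hTu α hα ↦
    hTu (apply_mem_span_pair_of_schur_eq_scalar hblock.symm hα hφu)⟩

theorem charpoly_dvd_X_sub_C_det_of_le_one {n : ℕ} (hn : n ≤ 1) (M : Matrix (Fin n) (Fin n) F) :
    M.charpoly ∣ X - C M.det := by
  interval_cases n
  · simp [Matrix.charpoly]
  · simp [Matrix.charpoly, charmatrix, Matrix.det_unique]

theorem exists_mul_eq_charpoly_eq_X_sub_one_pow {n : ℕ} (M : Matrix (Fin n) (Fin n) F)
    (hM : M.det ≠ 0) (hs : n ≤ 1 ∨ ∀ c, M ≠ scalar _ c) :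
    ∃ A B, M = A * B ∧ A.charpoly = (X - 1) ^ n ∧
      B.charpoly ∣ (X - 1) ^ n * (X - C M.det) := by
  induction n with
  | zero => exact ⟨1, M, (one_mul M).symm, by simp, by simp⟩
  | succ n ih =>
    rcases hs with hn | hs
    · refine ⟨1, M, (one_mul M).symm, by simp [charpoly_one],
      (charpoly_dvd_X_sub_C_det_of_le_one hn M).trans (dvd_mul_left _ _)⟩
    have hns (c : F) : M.toLin' ≠ c • 1 := fun hc ↦ hs c <| toLin'.injective <| by
      rw [hc, scalar_apply, ← smul_one_eq_diagonal, map_smul, toLin'_one, Module.End.one_eq_id]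
    obtain ⟨b, r, c, D, hb, hD⟩ := exists_basis_toMatrix_eq_fromBlocks (T := M.toLin')
      (mulVec_injective_iff_isUnit.2 ((isUnit_iff_isUnit_det _).2 hM.isUnit)) hns
      (finrank_fin_fun F)
    have hdet : (D - c * r).det = M.det := by
      rw [← det_fromBlocks_one₁₁, ← hb, LinearMap.det_toMatrix, LinearMap.det_toLin']
    obtain ⟨A, B, hAB, hA, hB⟩ := ih (D - c * r) (hdet ▸ hM) hD
    have hM' : M.toLin' = toLin b b (fromBlocks 1 0 c A) * toLin b b (fromBlocks 1 r 0 B) := by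
      rw [Module.End.mul_eq_comp, ← toLin_mul, fromBlocks_multiply]
      simp [← hAB, ← hb]
    refine ⟨LinearMap.toMatrix' (toLin b b (fromBlocks 1 0 c A)),
      LinearMap.toMatrix' (toLin b b (fromBlocks 1 r 0 B)), ?_, ?_, ?_⟩
    · rw [← LinearMap.toMatrix'_mul, ← hM', LinearMap.toMatrix'_toLin']
    · rw [← charpoly_toLin', toLin'_toMatrix', charpoly_toLin, charpoly_fromBlocks_zero₁₂, hA]
      simp [charpoly_one, pow_succ']
    · rw [← charpoly_toLin', toLin'_toMatrix', charpoly_toLin, charpoly_fromBlocks_zero₂₁,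
        charpoly_one, pow_succ', mul_assoc, Fintype.card_unit, pow_one, ← hdet]
      exact mul_dvd_mul_left _ hB

theorem isStronglyReversible_of_charpoly_dvd {ι : Type*} [Fintype ι] [DecidableEq ι]
    {A : Matrix ι ι F} {k : ℕ} (hA : A.charpoly ∣ (X ^ 2 - 1) ^ k) : IsStronglyReversible A := by
  have h : aeval (toLinAlgEquiv' A) ((X ^ 2 - 1) ^ k : F[X]) = 0 := by
    rw [← AlgEquiv.coe_toAlgHom, aeval_algHom_apply,
      aeval_eq_zero_of_dvd_aeval_eq_zero hA (aeval_self_charpoly A), map_zero]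
  simpa using (isStronglyReversible_of_aeval_eq_zero h).map LinearMap.toMatrixAlgEquiv'

theorem exists_isStronglyReversible_mul_eq_of_ne_scalar {n : ℕ} {M : Matrix (Fin n) (Fin n) F}
    (hM : M.det ^ 2 = 1) (hs : ∀ c, M ≠ scalar _ c) :
    ∃ A B, IsStronglyReversible A ∧ IsStronglyReversible B ∧ M = A * B := by
  have hM0 : M.det ≠ 0 := by
    intro h
    simp [h] at hM
  obtain ⟨A, B, hAB, hA, hB⟩ := exists_mul_eq_charpoly_eq_X_sub_one_pow M hM0 (.inr hs)
  have h1 : (X - 1 : F[X]) ∣ X ^ 2 - 1 := by simpa using sub_dvd_pow_sub_pow (X : F[X]) 1 2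
  have hdet : X - C M.det ∣ X ^ 2 - 1 := by
    simpa [← C_pow, hM] using sub_dvd_pow_sub_pow X (C M.det) 2
  refine ⟨A, B, isStronglyReversible_of_charpoly_dvd (k := n) ?_,
    isStronglyReversible_of_charpoly_dvd (k := n + 1) ?_, hAB⟩
  · exact hA ▸ pow_dvd_pow_of_dvd h1 n
  · exact hB.trans (pow_succ (X ^ 2 - 1 : F[X]) n ▸ mul_dvd_mul (pow_dvd_pow_of_dvd h1 n) hdet)

theorem mem_prodInv4_iff_exists_isStronglyReversible_mul {n : ℕ} {M : Matrix (Fin n) (Fin n) F} :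
    M ∈ ProdInv4 F n ↔ ∃ A B, IsStronglyReversible A ∧ IsStronglyReversible B ∧ M = A * B := by
  constructor
  · rintro ⟨J₁, J₂, J₃, J₄, h₁, h₂, h₃, h₄, rfl⟩
    exact ⟨J₁ * J₂, J₃ * J₄, ⟨J₁, J₂, h₁, h₂, rfl⟩, ⟨J₃, J₄, h₃, h₄, rfl⟩, by
      simp only [Matrix.mul_assoc]⟩
  · rintro ⟨_, _, ⟨J₁, J₂, h₁, h₂, rfl⟩, ⟨J₃, J₄, h₃, h₄, rfl⟩, rfl⟩
    exact ⟨J₁, J₂, J₃, J₄, h₁, h₂, h₃, h₄, by simp only [Matrix.mul_assoc]⟩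

theorem mem_prodInv4_iff_det_sq_eq_one {n : ℕ} {M : Matrix (Fin n) (Fin n) F} :
    M ∈ ProdInv4 F n ↔ M.det ^ 2 = 1 := by
  refine ⟨?_, fun hM ↦ mem_prodInv4_iff_exists_isStronglyReversible_mul.2 ?_⟩
  · rintro ⟨J₁, J₂, J₃, J₄, h₁, h₂, h₃, h₄, rfl⟩
    have hdet {J : Matrix (Fin n) (Fin n) F} (h : J * J = 1) : J.det ^ 2 = 1 := by
      rw [sq, ← det_mul, h, det_one]
    simp only [det_mul, mul_pow, hdet h₁, hdet h₂, hdet h₃, hdet h₄, mul_one]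
  · by_cases hs : ∃ c, M = scalar _ c
    · obtain ⟨c, rfl⟩ := hs
      refine exists_isStronglyReversible_mul_eq_scalar ?_
      rw [scalar_apply, det_diagonal, Finset.prod_const, Finset.card_fin] at hM
      rw [mul_comm, pow_mul, hM]
    · exact exists_isStronglyReversible_mul_eq_of_ne_scalar hM (not_exists.1 hs)

end Factorization

section RankOne

variable {F m n : Type*} [Field F] [Fintype n]

theorem rank_le_one_iff_exists_eq_vecMulVec [Finite m] {A : Matrix m n F} :
    A.rank ≤ 1 ↔ ∃ u v, A = vecMulVec u v := by
  classical
  refine ⟨fun hA ↦ ?_, ?_⟩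
  · obtain ⟨u, hu⟩ := finrank_le_one_iff.1 hA
    choose v hv using fun j ↦ hu ⟨A.col j, Pi.single j 1, by simp⟩
    refine ⟨u, v, ext fun i j ↦ ?_⟩
    rw [vecMulVec_apply, mul_comm]
    exact (congrFun (congrArg Subtype.val (hv j)) i).symm
  · rintro ⟨u, v, rfl⟩
    exact rank_vecMulVec_le u v

end RankOne

section Dixon

theorem comap_eq_self_of_le_comap {R : Type*} [CommRing R] [IsNoetherianRing R] {φ : R →+* R}
    (hφ : Function.Surjective φ) {I : Ideal R} (hI : I ≤ I.comap φ) : I.comap φ = I := by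
  have hmono : Monotone (Ideal.comap φ) := fun _ _ h ↦ Ideal.comap_mono h
  obtain ⟨n, hn⟩ := monotone_stabilizes_iff_noetherian.2 ‹_›
    ⟨fun k ↦ (Ideal.comap φ)^[k] I, hmono.monotone_iterate_of_le_map hI⟩
  refine ((Ideal.comap_injective_of_surjective φ hφ).iterate n ?_).symm
  rw [← Function.iterate_succ_apply]
  exact hn (n + 1) n.le_succ

/-- Composition with `T` is a surjective endomorphism of the polynomial ring that pulls the
vanishing ideal `I` of the zero set of `p` back to an ideal containing `I`, hence to `I` by
Noetherianity. -/
theorem eval_repr_apply_eq_zero_iff {F V σ : Type*} [Field F] [AddCommGroup V] [Module F V]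
    [Finite σ] (b : Basis σ F V) {T : V ≃ₗ[F] V} {p : MvPolynomial σ F}
    (h : ∀ v, p.eval (b.repr v) = 0 → p.eval (b.repr (T v)) = 0) (v : V) :
    p.eval (b.repr (T v)) = 0 ↔ p.eval (b.repr v) = 0 := by
  classical
  cases nonempty_fintype σ
  refine ⟨fun hTv ↦ ?_, h v⟩
  let φ := MvPolynomial.bind₁ (T.toLinearMap.toMvPolynomial b b)
  have hφ_eval (q : MvPolynomial σ F) (w : V) :
      (φ q).eval (b.repr w) = q.eval (b.repr (T w)) := by
    refine (MvPolynomial.eval₂Hom_bind₁ _ _ _ q).trans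
      (congrArg (fun x ↦ MvPolynomial.eval x q) (funext fun i ↦ ?_))
    exact (T.toLinearMap.toMvPolynomial_eval_eq_apply b b i (b.repr w)).trans (by simp)
  have hφ_surj : Function.Surjective φ := fun q ↦ by
    refine ⟨MvPolynomial.bind₁ (T.symm.toLinearMap.toMvPolynomial b b) q, ?_⟩
    rw [MvPolynomial.bind₁_bind₁]
    simp only [← LinearMap.toMvPolynomial_comp, LinearEquiv.symm_comp, LinearMap.toMvPolynomial_id,
      MvPolynomial.bind₁_X_left, AlgHom.id_apply]
  let Z : Set (σ → F) := (fun w ↦ b.repr w) '' {w | p.eval (b.repr w) = 0}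
  let I := MvPolynomial.vanishingIdeal F Z
  have hI_mem (q : MvPolynomial σ F) :
      q ∈ I ↔ ∀ w, p.eval (b.repr w) = 0 → q.eval (b.repr w) = 0 := by
    simp [I, Z, MvPolynomial.aeval_eq_eval]
  have hI : I.comap φ.toRingHom = I := comap_eq_self_of_le_comap hφ_surj fun r hr ↦
    (hI_mem _).2 fun w hw ↦ (hφ_eval r w).trans ((hI_mem r).1 hr _ (h w hw))
  obtain ⟨q, hq⟩ := hφ_surj p
  have hqI : q ∈ I := by
    rw [← hI, Ideal.mem_comap, hI_mem]
    exact fun w hw ↦ (congrArg _ hq).trans hw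
  rw [← hq, hφ_eval]
  exact (hI_mem q).1 hqI _ hTv

theorem det_sq_apply_eq_one_iff {F ι : Type*} [Field F] [Fintype ι] [DecidableEq ι]
    {T : Matrix ι ι F ≃ₗ[F] Matrix ι ι F} (h : ∀ X, X.det ^ 2 = 1 → (T X).det ^ 2 = 1)
    (X : Matrix ι ι F) : (T X).det ^ 2 = 1 ↔ X.det ^ 2 = 1 := by
  let b := Matrix.stdBasis F ι ι
  let p : MvPolynomial (ι × ι) F := (mvPolynomialX ι ι F).det ^ 2 - 1
  have hp (Y : Matrix ι ι F) : p.eval (b.repr Y) = 0 ↔ Y.det ^ 2 = 1 := by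
    rw [map_sub, map_pow, eval_det_mvPolynomialX, map_one, sub_eq_zero]
    rfl
  simp only [← hp] at h ⊢
  exact eval_repr_apply_eq_zero_iff b h X

end Dixon

section Pencil

variable {F ι : Type*} [Field F] [Fintype ι] [DecidableEq ι]

/-- The sets arising as the solutions `t` of `(1 + τ * t) ^ 2 = 1` for a fixed `τ` when `2 ≠ 0`;
they describe how a line through a point of the set `det ^ 2 = 1` can meet it. -/
def IsUnivOrPair (Z : Set F) : Prop :=
  Z = Set.univ ∨ ∃ t₀ ≠ 0, Z = {0, t₀}

/-- The matrices `N` such that, along any line of direction `N` through a matrix of determinant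
`±1`, the determinant is `±1` either everywhere or exactly twice. For `2 ≠ 0` this describes the
matrices of rank at most one in terms of the set `det ^ 2 = 1` alone. -/
def HasTwoPointPencils (N : Matrix ι ι F) : Prop :=
  ∀ X : Matrix ι ι F, X.det ^ 2 = 1 → IsUnivOrPair {t : F | (X + t • N).det ^ 2 = 1}

theorem det_add_smul_vecMulVec {X : Matrix ι ι F} (hX : IsUnit X.det) (u v : ι → F) (t : F) :
    (X + t • vecMulVec u v).det = X.det * (1 + (v ⬝ᵥ X⁻¹ *ᵥ u) * t) := by
  rw [← smul_vecMulVec, vecMulVec_eq Unit, det_add_replicateCol_mul_replicateRow hX,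
    Matrix.mul_assoc, ← replicateCol_mulVec, replicateRow_mul_replicateCol, det_unique (n := Unit)]
  simp [mulVec_smul, mul_comm]

theorem isUnivOrPair_setOf_one_add_mul_sq_eq_one (h2 : (2 : F) ≠ 0) (τ : F) :
    IsUnivOrPair {t | (1 + τ * t) ^ 2 = 1} := by
  obtain rfl | hτ := eq_or_ne τ 0
  · exact .inl (by simp)
  · refine .inr ⟨-2 / τ, by simp [h2, hτ], Set.ext fun t ↦ ?_⟩
    rw [Set.mem_ofPred_eq, Set.mem_insert_iff, Set.mem_singleton_iff, sq_eq_one_iff,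
      eq_div_iff hτ, add_eq_left, mul_eq_zero_iff_left hτ]
    exact or_congr_right ⟨fun h ↦ by linear_combination h, fun h ↦ by linear_combination h⟩

theorem hasTwoPointPencils_vecMulVec (h2 : (2 : F) ≠ 0) (u v : ι → F) :
    HasTwoPointPencils (vecMulVec u v) := fun X hX ↦ by
  have hXu : IsUnit X.det := IsUnit.of_pow_eq_one hX two_ne_zero
  simpa only [det_add_smul_vecMulVec hXu, mul_pow, hX, one_mul] using
    isUnivOrPair_setOf_one_add_mul_sq_eq_one h2 (v ⬝ᵥ X⁻¹ *ᵥ u)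

theorem exists_det_add_smul_one_eq_eval {p : F[X]} (hp : p.Monic)
    (hdeg : p.natDegree = Fintype.card ι) :
    ∃ C : Matrix ι ι F, ∀ t : F, (C + t • (1 : Matrix ι ι F)).det = p.eval t := by
  let pb := AdjoinRoot.powerBasis hp.ne_zero
  let e : Fin pb.dim ≃ ι := Fintype.equivOfCardEq (by simp [pb, hdeg])
  let C := Matrix.reindex e e (Algebra.leftMulMatrix pb.basis pb.gen)
  have hC : C.charpoly = p := by
    rw [charpoly_reindex, charpoly_leftMulMatrix, AdjoinRoot.minpoly_powerBasis_gen,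
      hp.leadingCoeff, inv_one, C_1, mul_one]
  refine ⟨-C, fun t ↦ ?_⟩
  rw [← hC, eval_charpoly, neg_add_eq_sub, scalar_apply, smul_one_eq_diagonal]

theorem exists_det_add_smul_diagonal_eq [DecidableEq F] {d : ι → F} {p : F[X]} (hp : p.Monic)
    (hdeg : p.natDegree = Fintype.card {i // d i ≠ 0}) :
    ∃ X : Matrix ι ι F, ∀ t : F,
      (X + t • diagonal d).det = (∏ i : {i // d i ≠ 0}, d i) * p.eval t := by
  obtain ⟨C, hC⟩ := exists_det_add_smul_one_eq_eval hp hdeg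
  let e := Equiv.sumCompl fun i ↦ d i ≠ 0
  let D : Matrix {i // d i ≠ 0} {i // d i ≠ 0} F := diagonal fun i ↦ d i
  have hd : (diagonal d).submatrix e e = fromBlocks D 0 0 0 := by
    rw [submatrix_diagonal_equiv, ← diagonal_zero, fromBlocks_diagonal]
    congr 1
    ext (i | i)
    exacts [rfl, not_not.1 i.2]
  refine ⟨(fromBlocks (D * C) 0 0 1).submatrix e.symm e.symm, fun t ↦ ?_⟩
  rw [← det_submatrix_equiv_self e]
  have h : ((fromBlocks (D * C) 0 0 1).submatrix e.symm e.symm + t • diagonal d).submatrix e e =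
      fromBlocks (D * (C + t • 1)) 0 0 1 := by
    simp [submatrix_add, submatrix_smul, hd, fromBlocks_smul, fromBlocks_add, Matrix.mul_add]
  rw [h, det_fromBlocks_zero₂₁, det_mul, hC, det_diagonal, det_one, mul_one]

theorem exists_sq_eq_one_add_sq_ne_one (h2 : (2 : F) ≠ 0) {w : F} (hw : w ≠ 0) :
    ∃ ε : F, ε ^ 2 = 1 ∧ (w + ε) ^ 2 ≠ 1 := by
  by_contra! h
  have h4w : 2 * 2 * w = 0 := by
    linear_combination h 1 (one_pow 2) - h (-1) neg_one_sq
  exact mul_ne_zero (mul_ne_zero h2 h2) hw h4w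

theorem exists_monic_natDegree_two_not_isUnivOrPair (h2 : (2 : F) ≠ 0) {δ : F} (hδ : δ ≠ 0) :
    ∃ p : F[X], p.Monic ∧ p.natDegree = 2 ∧ (δ * p.eval 0) ^ 2 = 1 ∧
      ¬ IsUnivOrPair {t | (δ * p.eval t) ^ 2 = 1} := by
  obtain ⟨ε, hε, hδε⟩ := exists_sq_eq_one_add_sq_ne_one h2 hδ
  have heval (t : F) : δ * (X ^ 2 + C (δ⁻¹ * ε) : F[X]).eval t = δ * t ^ 2 + ε := by
    simp [mul_add, hδ]
  refine ⟨X ^ 2 + C (δ⁻¹ * ε), monic_X_pow_add_C _ two_ne_zero, natDegree_X_pow_add_C, ?_⟩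
  simp only [heval]
  refine ⟨by simpa using hε, ?_⟩
  rintro (h | ⟨t₀, ht₀, h⟩)
  · exact hδε (by simpa using Set.eq_univ_iff_forall.1 h 1)
  · have hneg : -t₀ ∈ ({0, t₀} : Set F) := by
      have : t₀ ∈ ({0, t₀} : Set F) := by simp
      rw [← h] at this ⊢
      simpa using this
    obtain h0 | h0 := hneg
    · exact ht₀ (neg_eq_zero.1 h0)
    · rw [Set.mem_singleton_iff] at h0
      exact mul_ne_zero h2 ht₀ (by linear_combination -h0)

theorem exists_monic_natDegree_not_isUnivOrPair_of_sq_ne_one (h2 : (2 : F) ≠ 0) {δ b : F}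
    (hδ : δ ≠ 0) (hb : b ≠ 0) (hb1 : b ^ 2 ≠ 1) (k : ℕ) :
    ∃ p : F[X], p.Monic ∧ p.natDegree = k + 3 ∧ (δ * p.eval 0) ^ 2 = 1 ∧
      ¬ IsUnivOrPair {t | (δ * p.eval t) ^ 2 = 1} := by
  obtain ⟨ε, hε, hbε⟩ := exists_sq_eq_one_add_sq_ne_one h2
    (mul_ne_zero hδ (mul_ne_zero (pow_ne_zero (k + 1) hb) (sub_ne_zero.2 hb1)))
  have hmonic : (X ^ (k + 1) * (X ^ 2 - C 1) : F[X]).Monic :=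
    (monic_X_pow _).mul (monic_X_pow_sub_C _ two_ne_zero)
  have hdeg : (X ^ (k + 1) * (X ^ 2 - C 1) : F[X]).natDegree = k + 3 := by
    rw [(monic_X_pow _).natDegree_mul (monic_X_pow_sub_C _ two_ne_zero), natDegree_X_pow,
      natDegree_X_pow_sub_C]
  have heval (t : F) : δ * (X ^ (k + 1) * (X ^ 2 - C 1) + C (δ⁻¹ * ε) : F[X]).eval t =
      δ * (t ^ (k + 1) * (t ^ 2 - 1)) + ε := by
    simp [mul_add, hδ]
  refine ⟨X ^ (k + 1) * (X ^ 2 - C 1) + C (δ⁻¹ * ε), hmonic.add_of_left ?_,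
    natDegree_add_C.trans hdeg, ?_⟩
  · exact degree_C_le.trans_lt (natDegree_pos_iff_degree_pos.1 (by omega))
  simp only [heval]
  refine ⟨by simpa using hε, ?_⟩
  rintro (h | ⟨t₀, -, h⟩)
  · exact hbε (Set.eq_univ_iff_forall.1 h b)
  · have h1 : (1 : F) ∈ ({0, t₀} : Set F) := h ▸ by simpa using hε
    have h_neg1 : (-1 : F) ∈ ({0, t₀} : Set F) := h ▸ by simpa using hε
    have h1' : 1 = t₀ := by simpa using h1
    have h_neg1' : -1 = t₀ := by simpa using h_neg1
    exact h2 (by linear_combination h1' - h_neg1')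

theorem exists_monic_natDegree_not_isUnivOrPair_of_forall_sq_eq_one {δ : F} (hδ : δ ≠ 0)
    (hF : ∀ b : F, b ≠ 0 → b ^ 2 = 1) (k : ℕ) :
    ∃ p : F[X], p.Monic ∧ p.natDegree = k + 3 ∧ (δ * p.eval 0) ^ 2 = 1 ∧
      ¬ IsUnivOrPair {t | (δ * p.eval t) ^ 2 = 1} := by
  have hmonic₁ : (X ^ 2 - C 1 : F[X]).Monic := monic_X_pow_sub_C _ two_ne_zero
  have hmonic₂ : (X ^ (k + 1) - C δ⁻¹ : F[X]).Monic := monic_X_pow_sub_C _ k.succ_ne_zero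
  have heval {t : F} (ht : t ≠ 0) :
      ((X ^ 2 - C 1) * (X ^ (k + 1) - C δ⁻¹) : F[X]).eval t = 0 := by
    simp [hF t ht]
  refine ⟨(X ^ 2 - C 1) * (X ^ (k + 1) - C δ⁻¹), hmonic₁.mul hmonic₂, ?_, by simp [hδ], ?_⟩
  · rw [hmonic₁.natDegree_mul hmonic₂, natDegree_X_pow_sub_C, natDegree_X_pow_sub_C]
    ring
  · rintro (h | ⟨t₀, ht₀, h⟩)
    · have h1 : (1 : F) ∈ Set.univ := trivial
      rw [← h, Set.mem_ofPred_eq, heval one_ne_zero] at h1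
      simp at h1
    · have h1 : t₀ ∈ ({0, t₀} : Set F) := by simp
      rw [← h, Set.mem_ofPred_eq, heval ht₀] at h1
      simp at h1

theorem exists_monic_natDegree_not_isUnivOrPair (h2 : (2 : F) ≠ 0) {δ : F} (hδ : δ ≠ 0) {r : ℕ}
    (hr : 2 ≤ r) :
    ∃ p : F[X], p.Monic ∧ p.natDegree = r ∧ (δ * p.eval 0) ^ 2 = 1 ∧
      ¬ IsUnivOrPair {t | (δ * p.eval t) ^ 2 = 1} := by
  obtain rfl | ⟨k, rfl⟩ : r = 2 ∨ ∃ k, r = k + 3 :=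
    hr.eq_or_lt.imp Eq.symm fun h ↦ ⟨r - 3, by omega⟩
  · exact exists_monic_natDegree_two_not_isUnivOrPair h2 hδ
  by_cases! hF : ∀ b : F, b ≠ 0 → b ^ 2 = 1
  · exact exists_monic_natDegree_not_isUnivOrPair_of_forall_sq_eq_one hδ hF k
  · obtain ⟨b, hb, hb1⟩ := hF
    exact exists_monic_natDegree_not_isUnivOrPair_of_sq_ne_one h2 hδ hb hb1 k

theorem rank_diagonal_le_one_of_hasTwoPointPencils (h2 : (2 : F) ≠ 0) {d : ι → F}
    (hd : HasTwoPointPencils (diagonal d)) : (diagonal d).rank ≤ 1 := by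
  classical
  rw [rank_diagonal]
  by_contra! hr
  obtain ⟨p, hp, hdeg, hp0, hpair⟩ := exists_monic_natDegree_not_isUnivOrPair h2
    (Finset.prod_ne_zero_iff.2 fun (i : {i // d i ≠ 0}) _ ↦ i.2) hr
  obtain ⟨X, hX⟩ := exists_det_add_smul_diagonal_eq hp hdeg
  refine hpair ?_
  simpa only [hX] using hd X (by simpa [← hX] using hp0)

theorem HasTwoPointPencils.of_mul_mul {A N B : Matrix ι ι F} (hA : A.det = 1) (hB : B.det = 1)
    (h : HasTwoPointPencils (A * N * B)) : HasTwoPointPencils N := fun X hX ↦ by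
  have hmul (t : F) : (A * X * B + t • (A * N * B)).det = (X + t • N).det := by
    rw [show A * X * B + t • (A * N * B) = A * (X + t • N) * B by
      simp [Matrix.mul_add, Matrix.add_mul], det_mul, det_mul, hA, hB, one_mul, mul_one]
  simpa only [hmul] using h (A * X * B) (by simpa [hA, hB] using hX)

theorem hasTwoPointPencils_iff_rank_le_one (h2 : (2 : F) ≠ 0) {N : Matrix ι ι F} :
    HasTwoPointPencils N ↔ N.rank ≤ 1 := by
  refine ⟨fun hN ↦ ?_, fun hN ↦ ?_⟩
  · obtain ⟨L, L', d, rfl⟩ := Matrix.Pivot.exists_list_transvec_mul_diagonal_mul_list_transvec N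
    have hd := hN.of_mul_mul (TransvectionStruct.det_toMatrix_prod L)
      (TransvectionStruct.det_toMatrix_prod L')
    exact (rank_mul_le_left _ _).trans <| (rank_mul_le_right _ _).trans <|
      rank_diagonal_le_one_of_hasTwoPointPencils h2 hd
  · obtain ⟨u, v, rfl⟩ := rank_le_one_iff_exists_eq_vecMulVec.1 hN
    exact hasTwoPointPencils_vecMulVec h2 u v

theorem rank_apply_le_one_of_forall_det_sq_eq_one_iff (h2 : (2 : F) ≠ 0)
    {T : Matrix ι ι F →ₗ[F] Matrix ι ι F} (hT : Function.Surjective T)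
    (hdet : ∀ X, (T X).det ^ 2 = 1 ↔ X.det ^ 2 = 1)
    {N : Matrix ι ι F} (hN : N.rank ≤ 1) : (T N).rank ≤ 1 := by
  rw [← hasTwoPointPencils_iff_rank_le_one h2] at hN ⊢
  refine hT.forall.2 fun X hX ↦ ?_
  simpa only [← map_smul, ← map_add, hdet] using hN X ((hdet X).1 hX)

end Pencil

section RankOneSubspace

variable {F m n : Type*} [Field F]

theorem exists_smul_eq_of_forall_mul_eq_mul {a c : m → F} (ha : a ≠ 0)
    (h : ∀ i j, a i * c j = a j * c i) : ∃ t : F, t • a = c := by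
  obtain ⟨i, hi⟩ := Function.ne_iff.1 ha
  refine ⟨c i / a i, funext fun j ↦ ?_⟩
  rw [Pi.smul_apply, smul_eq_mul, div_mul_eq_mul_div, div_eq_iff hi]
  linear_combination -h i j

theorem exists_smul_eq_of_vecMulVec_eq {a c : m → F} {b d : n → F} (ha : a ≠ 0)
    (h : vecMulVec a b = vecMulVec c d) : ∃ t : F, t • d = b := by
  obtain ⟨i, hi⟩ := Function.ne_iff.1 ha
  refine ⟨c i / a i, funext fun j ↦ ?_⟩
  have hij : a i * b j = c i * d j := congrFun (congrFun h i) j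
  rw [Pi.smul_apply, smul_eq_mul, div_mul_eq_mul_div, div_eq_iff hi]
  linear_combination -hij

/-- Each minor of `vecMulVec a b + vecMulVec c d` is one of `![a, c]` times one of `![b, d]`. -/
theorem exists_smul_eq_or_of_rank_add_le_one [Finite m] [Fintype n] {a c : m → F} {b d : n → F}
    (ha : a ≠ 0) (hb : b ≠ 0) (h : (vecMulVec a b + vecMulVec c d).rank ≤ 1) :
    (∃ t : F, t • a = c) ∨ ∃ t : F, t • b = d := by
  obtain ⟨u, v, huv⟩ := rank_le_one_iff_exists_eq_vecMulVec.1 h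
  have hentry (i j) : a i * b j + c i * d j = u i * v j := congrFun (congrFun huv i) j
  by_contra! hne
  have hac : ∃ i j, a i * c j - a j * c i ≠ 0 := by
    by_contra! hac
    obtain ⟨t, ht⟩ := exists_smul_eq_of_forall_mul_eq_mul ha fun i j ↦ sub_eq_zero.1 (hac i j)
    exact hne.1 t ht
  have hbd : ∃ k l, b k * d l - b l * d k ≠ 0 := by
    by_contra! hbd
    obtain ⟨t, ht⟩ := exists_smul_eq_of_forall_mul_eq_mul hb fun k l ↦ sub_eq_zero.1 (hbd k l)
    exact hne.2 t ht
  obtain ⟨i, j, hij⟩ := hac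
  obtain ⟨k, l, hkl⟩ := hbd
  refine mul_ne_zero hij hkl ?_
  calc (a i * c j - a j * c i) * (b k * d l - b l * d k)
      = (a i * b k + c i * d k) * (a j * b l + c j * d l)
        - (a i * b l + c i * d l) * (a j * b k + c j * d k) := by ring
    _ = 0 := by simp only [hentry]; ring

theorem exists_comp_eq_of_range_le {R V W U : Type*} [Ring R] [AddCommGroup V] [AddCommGroup W]
    [AddCommGroup U] [Module R V] [Module R W] [Module R U] [Module.Projective R V]
    {f : W →ₗ[R] U} {L : V →ₗ[R] U} (h : ∀ v, L v ∈ f.range) :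
    ∃ g : V →ₗ[R] W, ∀ v, f (g v) = L v := by
  obtain ⟨g, hg⟩ := Module.projective_lifting_property f.rangeRestrict (L.codRestrict _ h)
    f.surjective_rangeRestrict
  exact ⟨g, fun v ↦ congrArg Subtype.val (LinearMap.congr_fun hg v)⟩

theorem exists_vecMulVec_of_forall_rank_le_one [Finite m] [Fintype n] {V : Type*} [AddCommGroup V]
    [Module F V] {L : V →ₗ[F] Matrix m n F} (hL : ∀ v, (L v).rank ≤ 1) :
    (∃ a, ∃ g : V →ₗ[F] n → F, ∀ v, vecMulVec a (g v) = L v) ∨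
      ∃ b, ∃ g : V →ₗ[F] m → F, ∀ v, vecMulVec (g v) b = L v := by
  by_cases! h0 : ∀ v, L v = 0
  · exact .inl ⟨0, 0, by simp [h0, zero_vecMulVec]⟩
  obtain ⟨v₀, hv₀⟩ := h0
  obtain ⟨a, b, hab⟩ := rank_le_one_iff_exists_eq_vecMulVec.1 (hL v₀)
  have ha : a ≠ 0 := by rintro rfl; exact hv₀ (hab.trans (zero_vecMulVec b))
  have hb : b ≠ 0 := by rintro rfl; exact hv₀ (hab.trans (by ext; simp [vecMulVec_apply]))
  let A : (n → F) →ₗ[F] Matrix m n F := vecMulVecBilin F F a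
  let B : (m → F) →ₗ[F] Matrix m n F := (vecMulVecBilin F F).flip b
  have hcover (v : V) : v ∈ A.range.comap L ∨ v ∈ B.range.comap L := by
    obtain ⟨c, d, hcd⟩ := rank_le_one_iff_exists_eq_vecMulVec.1 (hL v)
    have hsum : (vecMulVec a b + vecMulVec c d).rank ≤ 1 := by
      rw [← hab, ← hcd, ← map_add]
      exact hL _
    refine (exists_smul_eq_or_of_rank_add_le_one ha hb hsum).imp ?_ ?_ <;> rintro ⟨t, rfl⟩
    exacts [⟨t • d, by simp [A, hcd]⟩, ⟨t • c, by simp [B, hcd]⟩]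
  have hunion : ((⊤ : Submodule F V) : Set V) ⊆ A.range.comap L ∪ B.range.comap L :=
    fun v _ ↦ hcover v
  refine (AddSubgroupClass.subset_union.1 hunion).imp (fun h ↦ ⟨a, ?_⟩) (fun h ↦ ⟨b, ?_⟩)
  · exact exists_comp_eq_of_range_le (f := A) fun v ↦ h (Submodule.mem_top (x := v))
  · exact exists_comp_eq_of_range_le (f := B) fun v ↦ h (Submodule.mem_top (x := v))

/-- Each row of `L v` is a multiple of `g v`, and an endomorphism with all vectors as eigenvectors
is a homothety. -/
theorem exists_forall_vecMulVec_eq_of_forall_exists [Finite n]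
    {L : (n → F) →ₗ[F] Matrix m n F} {g : (n → F) →ₗ[F] n → F}
    (hg : Function.Injective g) (h : ∀ v, ∃ w, vecMulVec w (g v) = L v) :
    ∃ w, ∀ v, vecMulVec w (g v) = L v := by
  let e := LinearEquiv.ofInjectiveEndo g hg
  have hrow (i : m) : ∃ t : F, ∀ v, t • g v = (L v) i := by
    let f : (n → F) →ₗ[F] n → F := LinearMap.proj i ∘ₗ L ∘ₗ e.symm.toLinearMap
    obtain ⟨t, ht⟩ := f.exists_eq_smul_id_of_forall_notLinearIndependent fun x hx ↦ by
      obtain ⟨w, hw⟩ := h (e.symm x)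
      have hgx : g (e.symm x) = x := e.apply_symm_apply x
      refine (LinearIndependent.pair_iff' (hx.ne_zero 0)).1 hx (w i) ?_
      rw [hgx] at hw
      exact congrFun hw i
    refine ⟨t, fun v ↦ ?_⟩
    calc t • g v = f (e v) := (LinearMap.congr_fun ht (g v)).symm
      _ = L v i := congrArg (fun x ↦ L x i) (e.symm_apply_apply v)
  choose w hw using hrow
  exact ⟨w, fun v ↦ Matrix.ext fun i j ↦ congrFun (hw i v) j⟩

end RankOneSubspace

section LinearPreserver

variable {F ι : Type*} [Field F] {T : Matrix ι ι F →ₗ[F] Matrix ι ι F}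

theorem injective_of_vecMulVec_eq_apply (hT : Function.Injective T) {u₀ p : ι → F}
    (hu₀ : u₀ ≠ 0) {g : (ι → F) →ₗ[F] ι → F}
    (h : ∀ v, vecMulVec p (g v) = T (vecMulVec u₀ v)) : Function.Injective g := by
  refine (injective_iff_map_eq_zero g).2 fun v hv ↦ ?_
  have h0 : vecMulVec u₀ v = 0 := hT (by rw [← h, hv, vecMulVec_zero, map_zero])
  exact (vecMulVec_eq_zero.1 h0).resolve_left hu₀

variable [Nontrivial ι]

theorem not_forall_vecMulVec_eq_apply [Finite ι] (hT : Function.Injective T) {u₀ p : ι → F}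
    (hu₀ : u₀ ≠ 0) {g : (ι → F) →ₗ[F] ι → F}
    (h : ∀ v, vecMulVec p (g v) = T (vecMulVec u₀ v)) {v : ι → F} (hv : v ≠ 0)
    (k : (ι → F) → ι → F) : ¬ ∀ u, vecMulVec p (k u) = T (vecMulVec u v) := by
  intro hk
  cases nonempty_fintype ι
  have hg := injective_of_vecMulVec_eq_apply hT hu₀ h
  obtain ⟨u, hu⟩ := exists_linearIndependent_pair_of_one_lt_finrank
    (by rw [finrank_fintype_fun_eq_card]; exact Fintype.one_lt_card) hu₀
  obtain ⟨v', hv'⟩ := LinearMap.injective_iff_surjective.1 hg (k u)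
  have huv : vecMulVec u v = vecMulVec u₀ v' := hT (by rw [← hk, ← h, hv'])
  obtain ⟨t, ht⟩ := exists_smul_eq_of_vecMulVec_eq hv
    (show vecMulVec v u = vecMulVec v' u₀ by rw [← transpose_vecMulVec, huv, transpose_vecMulVec])
  exact (LinearIndependent.pair_iff' hu₀).1 hu t ht

variable [Fintype ι]

theorem exists_vecMulVec_eq_apply_vecMulVec (hT : Function.Injective T)
    (hrank : ∀ N : Matrix ι ι F, N.rank ≤ 1 → (T N).rank ≤ 1) {u₀ p : ι → F} (hu₀ : u₀ ≠ 0)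
    {g : (ι → F) →ₗ[F] ι → F} (h : ∀ v, vecMulVec p (g v) = T (vecMulVec u₀ v)) (u v : ι → F) :
    ∃ w, vecMulVec w (g v) = T (vecMulVec u v) := by
  obtain rfl | hv := eq_or_ne v 0
  · exact ⟨0, by simp⟩
  have h0 : T (vecMulVec u₀ v) ≠ 0 := (map_ne_zero_iff T hT).2 (vecMulVec_ne_zero hu₀ hv)
  obtain ⟨a, k, hk⟩ | ⟨b, k, hk⟩ := exists_vecMulVec_of_forall_rank_le_one
    (L := T ∘ₗ (vecMulVecBilin F F).flip v) fun u ↦ hrank _ (rank_vecMulVec_le u v)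
  all_goals
    replace hk : ∀ u, _ = T (vecMulVec u v) := hk
    have hk₀ : k u₀ ≠ 0 := fun hk₀ ↦ h0 (by simp [← hk, hk₀, zero_vecMulVec])
  · obtain ⟨t, rfl⟩ : ∃ t : F, t • p = a := exists_smul_eq_of_vecMulVec_eq hk₀ <| by
      rw [← transpose_vecMulVec, hk, ← h, transpose_vecMulVec]
    refine absurd (fun u ↦ ?_) (not_forall_vecMulVec_eq_apply hT hu₀ h hv (t • k))
    exact (vecMulVec_smul t p (k u)).trans ((smul_vecMulVec t p (k u)).symm.trans (hk u))
  · obtain ⟨t, rfl⟩ := exists_smul_eq_of_vecMulVec_eq hk₀ ((hk u₀).trans (h v).symm)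
    exact ⟨t • k u, by rw [← hk, smul_vecMulVec, vecMulVec_smul]⟩

theorem exists_forall_apply_eq_mul_mul (hT : Function.Injective T)
    (hrank : ∀ N : Matrix ι ι F, N.rank ≤ 1 → (T N).rank ≤ 1) {u₀ p : ι → F} (hu₀ : u₀ ≠ 0)
    {g : (ι → F) →ₗ[F] ι → F} (h : ∀ v, vecMulVec p (g v) = T (vecMulVec u₀ v)) :
    ∃ P Q : Matrix ι ι F, ∀ X, T X = P * X * Q := by
  classical
  have hcol (u : ι → F) : ∃ w, ∀ v, vecMulVec w (g v) = T (vecMulVec u v) :=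
    exists_forall_vecMulVec_eq_of_forall_exists (L := T ∘ₗ vecMulVecBilin F F u)
      (injective_of_vecMulVec_eq_apply hT hu₀ h)
      (exists_vecMulVec_eq_apply_vecMulVec hT hrank hu₀ h u)
  choose w hw using hcol
  let P : Matrix ι ι F := (of fun i ↦ w (Pi.single i 1))ᵀ
  let Q : Matrix ι ι F := of fun j ↦ g (Pi.single j 1)
  have hPQ : T = LinearMap.mulRight F Q ∘ₗ LinearMap.mulLeft F P := by
    refine Matrix.ext_linearMap _ fun i j ↦ LinearMap.ext_ring ?_
    simp only [LinearMap.comp_apply, LinearMap.mulRight_apply, LinearMap.mulLeft_apply,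
      singleLinearMap_apply, single_eq_single_vecMulVec_single, mul_vecMulVec, vecMulVec_mul,
      mulVec_single_one, single_one_vecMul, ← hw]
    rfl
  exact ⟨P, Q, LinearMap.congr_fun hPQ⟩

theorem exists_forall_apply_eq_mul_mul_or_transpose (hT : Function.Injective T)
    (hrank : ∀ N : Matrix ι ι F, N.rank ≤ 1 → (T N).rank ≤ 1) :
    ∃ P Q : Matrix ι ι F, (∀ X, T X = P * X * Q) ∨ ∀ X, T X = P * Xᵀ * Q := by
  obtain ⟨u₀, hu₀⟩ := exists_ne (0 : ι → F)
  obtain ⟨p, g, hg⟩ | ⟨p, g, hg⟩ := exists_vecMulVec_of_forall_rank_le_one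
    (L := T ∘ₗ vecMulVecBilin F F u₀) fun v ↦ hrank _ (rank_vecMulVec_le u₀ v)
  · obtain ⟨P, Q, hPQ⟩ := exists_forall_apply_eq_mul_mul hT hrank hu₀ hg
    exact ⟨P, Q, .inl hPQ⟩
  · obtain ⟨P, Q, hPQ⟩ := exists_forall_apply_eq_mul_mul
      (T := (transposeLinearEquiv ι ι F F).toLinearMap ∘ₗ T)
      ((transposeLinearEquiv ι ι F F).injective.comp hT)
      (fun N hN ↦ (rank_transpose (T N)).trans_le (hrank N hN)) hu₀
      (fun v ↦ (transpose_vecMulVec (g v) p).symm.trans (congrArg transpose (hg v)))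
    refine ⟨Qᵀ, Pᵀ, .inr fun X ↦ transpose_injective ?_⟩
    rw [transpose_mul, transpose_mul, transpose_transpose, transpose_transpose,
      transpose_transpose, ← Matrix.mul_assoc]
    exact hPQ X

end LinearPreserver

theorem stmt2 (F : Type*) [Field F] (hchar : ringChar F ≠ 2) (n : ℕ) (hn : 2 ≤ n)
    (T : Matrix (Fin n) (Fin n) F →ₗ[F] Matrix (Fin n) (Fin n) F)
    (hT : Function.Bijective T) :
    (∀ A ∈ ProdInv4 F n, T A ∈ ProdInv4 F n) ↔
      ∃ P Q : Matrix (Fin n) (Fin n) F, IsUnit P ∧ IsUnit Q ∧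
        ((P * Q).det = 1 ∨ (P * Q).det = -1) ∧
        ((∀ X, T X = P * X * Q) ∨ (∀ X, T X = P * Xᵀ * Q)) := by
  have h2 : (2 : F) ≠ 0 := Ring.two_ne_zero hchar
  have : Nontrivial (Fin n) := Fin.nontrivial_iff_two_le.2 hn
  simp only [mem_prodInv4_iff_det_sq_eq_one, ← sq_eq_one_iff]
  constructor
  · intro h
    have hdet : ∀ X, (T X).det ^ 2 = 1 ↔ X.det ^ 2 = 1 :=
      det_sq_apply_eq_one_iff (T := LinearEquiv.ofBijective T hT) h
    obtain ⟨P, Q, hPQ⟩ := exists_forall_apply_eq_mul_mul_or_transpose hT.1 fun _ ↦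
      rank_apply_le_one_of_forall_det_sq_eq_one_iff h2 hT.2 hdet
    have hd : (P * Q).det ^ 2 = 1 := by
      have hT1 : T 1 = P * Q := by rcases hPQ with h | h <;> simp [h]
      rw [← hT1, hdet, det_one, one_pow]
    obtain ⟨hP, hQ⟩ := IsUnit.mul_iff.1 (det_mul P Q ▸ IsUnit.of_pow_eq_one hd two_ne_zero)
    exact ⟨P, Q, (isUnit_iff_isUnit_det P).2 hP, (isUnit_iff_isUnit_det Q).2 hQ, hd, hPQ⟩
  · rintro ⟨P, Q, -, -, hd, hPQ⟩ A hA
    have hTA : (T A).det = (P * Q).det * A.det := by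
      rcases hPQ with h | h <;> rw [h] <;> simp only [det_mul, det_transpose] <;> ring
    rw [hTA, mul_pow, hd, hA, one_mul]
end

section
/- Let F be a field, let n ≥ 2, and let g(x) be a monic polynomial of degree n over F with g(0) ≠ 0 such that g is not a power of a self-reciprocal irreducible monic polynomial. Let A = C_g ⊕ C_{g̃} ∈ M_{2n}(F), where C_g and C_{g̃} are the companion matrices of g and of its reciprocal g̃, respectively (so A ∈ B_{2n}). Then there exists a strictly upper triangular matrix N ∈ M_{2n}(F) such that A(I + N) ∉ B_{2n}. -/
open Matrix Polynomial

/-- The set of matrices that are products of two involutions. -/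
def ProdInv2 (F : Type*) [Field F] (n : ℕ) : Set (Matrix (Fin n) (Fin n) F) :=
  {A | ∃ J₁ J₂ : Matrix (Fin n) (Fin n) F, J₁ * J₁ = 1 ∧ J₂ * J₂ = 1 ∧ A = J₁ * J₂}

/-- The companion matrix of a monic polynomial of degree `n`: entries `1` in positions
`(i+1, i)`, last column `(-a₀, …, -a_{n-1})ᵗ`, zeros elsewhere. -/
def companionMatrix {F : Type*} [Field F] (n : ℕ) (f : Polynomial F) :
    Matrix (Fin n) (Fin n) F :=
  fun i j => (if (i : ℕ) = (j : ℕ) + 1 then 1 else 0) +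
    (if (j : ℕ) + 1 = n then -(f.coeff i) else 0)

/-- The reciprocal polynomial `f̃(x) = a₀⁻¹ · xⁿ · f(1/x)`. -/
noncomputable def reciprocalPoly {F : Type*} [Field F] (f : Polynomial F) : Polynomial F :=
  Polynomial.C (f.coeff 0)⁻¹ * f.reverse

/-!
If `A = J₁ J₂` is a product of two involutions, then `A⁻¹ = J₁ A J₁`, so `A` and `A⁻¹` have the same
trace and the polynomials annihilating `A` are closed under reversal. Suppose that `A (1 + N)` is
such a product for every strictly upper triangular `N`. Comparing the traces for `N = 0` and
`N = E_{ij}`, `i < j`, gives `(A⁻¹)_{ji} = -A_{ji}`.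

Let `A = C_p ⊕ C_q`, so that `A e₁ = e₂`. If `n ≥ 3`, then also `A e₂ = e₃`; thus `A_{32} = 1`,
whereas `A⁻¹ e₂ = e₁` forces `(A⁻¹)_{32} = 0`. If `n = 2`, the same relation forces
`p(0) = q(0) = 1`. For `p = g` this makes `g` self-reciprocal, so `g` is reducible; it is not the
square of some `x + c` either, since `c ^ 2 = 1` would make `x + c` self-reciprocal. Hence there are
`c ≠ d` in `F` with `c d = 1`, and `N` can be chosen so that `A (1 + N)` has the Jordan form
`J₂(-c) ⊕ (-d) ⊕ (-d)`. Such a matrix is not similar to its inverse.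
-/

section Polynomials

lemma reverse_X_add_C {R : Type*} [Ring R] [Nontrivial R] (a : R) :
    (X + C a).reverse = 1 + C a * X := by
  have reverse_X : (X : R[X]).reverse = 1 := by
    rw [← one_mul X, reverse_mul_X, ← C_1, reverse_C]
  rw [reverse_add_C, reverse_X, natDegree_X, pow_one]

lemma semiconjBy_aeval {R A : Type*} [CommSemiring R] [Semiring A] [Algebra R A] {a x y : A}
    (h : SemiconjBy a x y) (p : R[X]) : SemiconjBy a (aeval x p) (aeval y p) := by
  induction p using Polynomial.induction_on' with
  | add p q hp hq => simpa only [map_add] using hp.add_right hq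
  | monomial k r =>
    simpa only [aeval_monomial] using
      SemiconjBy.mul_right (Algebra.commutes r a).symm (h.pow_right k)

lemma aeval_mul_pow_natDegree_eq_aeval_reverse {R A : Type*} [CommSemiring R] [Semiring A]
    [Algebra R A] {x y : A} (h : y * x = 1) (p : R[X]) :
    aeval y p * x ^ p.natDegree = aeval x p.reverse := by
  rw [aeval_eq_sum_range, aeval_eq_sum_range' (Nat.lt_succ_of_le (reverse_natDegree_le p)),
    ← Finset.sum_range_reflect, Finset.sum_mul]
  refine Finset.sum_congr rfl fun k hk ↦ ?_
  have hk : k ≤ p.natDegree := Nat.lt_succ_iff.mp (Finset.mem_range.mp hk)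
  rw [coeff_reverse, revAt_le hk, Nat.add_sub_cancel, smul_mul_assoc,
    ← Nat.sub_add_cancel hk, pow_add, ← mul_assoc, Nat.add_sub_cancel, pow_mul_pow_eq_one _ h,
    one_mul]

end Polynomials

section ReciprocalPoly

variable {F : Type*} [Field F]

lemma reciprocalPoly_eq_self {f : F[X]}
    (h : ∀ i ≤ f.natDegree, (f.coeff 0)⁻¹ * f.coeff (f.natDegree - i) = f.coeff i) :
    reciprocalPoly f = f := by
  ext i
  rw [reciprocalPoly, coeff_C_mul, coeff_reverse]
  rcases le_or_gt i f.natDegree with hi | hi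
  · rw [revAt_le hi, h i hi]
  · rw [revAt_eq_self_of_lt hi, coeff_eq_zero_of_natDegree_lt hi, mul_zero]

lemma reciprocalPoly_X_add_C {c : F} (hc : c * c = 1) : reciprocalPoly (X + C c) = X + C c := by
  apply reciprocalPoly_eq_self
  rw [natDegree_X_add_C]
  intro i hi
  interval_cases i <;>
    simp [coeff_X, coeff_C, inv_eq_of_mul_eq_one_left hc, hc]

lemma reciprocalPoly_of_monic_quadratic {g : F[X]} (hg : g.Monic) (hdeg : g.natDegree = 2)
    (hg0 : g.coeff 0 = 1) : reciprocalPoly g = g := by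
  have hg2 : g.coeff 2 = 1 := hdeg ▸ hg.coeff_natDegree
  apply reciprocalPoly_eq_self
  rw [hdeg]
  intro i hi
  interval_cases i <;> simp [hg0, hg2]

lemma exists_mul_eq_one_ne_of_not_pow {g : F[X]} (hg : g.Monic) (hdeg : g.natDegree = 2)
    (hg0 : g.coeff 0 = 1)
    (hnotpow : ¬ ∃ (p : F[X]) (k : ℕ), p.Monic ∧ Irreducible p ∧
      p = reciprocalPoly p ∧ 1 ≤ k ∧ g = p ^ k) :
    ∃ c d : F, c * d = 1 ∧ c ≠ d := by
  have hirr : ¬ Irreducible g := fun h ↦ hnotpow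
    ⟨g, 1, hg, h, (reciprocalPoly_of_monic_quadratic hg hdeg hg0).symm, le_rfl, (pow_one g).symm⟩
  obtain ⟨c, d, h0, h1⟩ := (hg.not_irreducible_iff_exists_add_mul_eq_coeff hdeg).mp hirr
  refine ⟨c, d, h0 ▸ hg0, ?_⟩
  rintro rfl
  have hsq : g = (X + C c) ^ 2 := by
    rw [hg.as_sum, hdeg]
    simp only [Finset.sum_range_succ, Finset.sum_range_zero, h0, h1, map_add, map_mul]
    ring
  exact hnotpow ⟨X + C c, 2, monic_X_add_C c, irreducible_of_degree_eq_one (degree_X_add_C c),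
    (reciprocalPoly_X_add_C (h0 ▸ hg0)).symm, one_le_two, hsq⟩

end ReciprocalPoly

section ProdInv2

variable {F : Type*} [Field F] {m : ℕ} {A : Matrix (Fin m) (Fin m) F}

lemma isUnit_det_of_mem_prodInv2 (hA : A ∈ ProdInv2 F m) : IsUnit A.det := by
  obtain ⟨J₁, J₂, h₁, h₂, rfl⟩ := hA
  exact det_mul J₁ J₂ ▸ (isUnit_det_of_right_inverse h₁).mul (isUnit_det_of_right_inverse h₂)

lemma exists_involution_semiconjBy_inv (hA : A ∈ ProdInv2 F m) :
    ∃ J : Matrix (Fin m) (Fin m) F, J * J = 1 ∧ SemiconjBy J A A⁻¹ := by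
  obtain ⟨J₁, J₂, h₁, h₂, rfl⟩ := hA
  refine ⟨J₁, h₁, ?_⟩
  rw [SemiconjBy, Matrix.mul_inv_rev, inv_eq_right_inv h₁, inv_eq_right_inv h₂, mul_assoc J₂, h₁,
    mul_one, ← mul_assoc, h₁, one_mul]

lemma trace_inv_of_mem_prodInv2 (hA : A ∈ ProdInv2 F m) : A⁻¹.trace = A.trace := by
  obtain ⟨J, hJ, hconj⟩ := exists_involution_semiconjBy_inv hA
  calc A⁻¹.trace = (A⁻¹ * J * J).trace := by rw [mul_assoc, hJ, mul_one]
    _ = (J * (J * A)).trace := by rw [← hconj.eq, trace_mul_comm]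
    _ = A.trace := by rw [← mul_assoc, hJ, one_mul]

lemma aeval_reverse_eq_zero_of_mem_prodInv2 (hA : A ∈ ProdInv2 F m) {p : F[X]}
    (hp : aeval A p = 0) : aeval A p.reverse = 0 := by
  obtain ⟨J, hJ, hconj⟩ := exists_involution_semiconjBy_inv hA
  have hinv : aeval A⁻¹ p = 0 := by
    have h := (semiconjBy_aeval hconj p).eq
    rw [hp, mul_zero] at h
    rw [← mul_one (aeval A⁻¹ p), ← hJ, ← mul_assoc, ← h, zero_mul]
  rw [← aeval_mul_pow_natDegree_eq_aeval_reverse (nonsing_inv_mul A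
    (isUnit_det_of_mem_prodInv2 hA)), hinv, zero_mul]

-- `(X + c)² (X + d)` and its reciprocal `(X + d)² (X + c)` differ by `(c - d) (X + c) (X + d)`.
lemma aeval_eq_zero_of_mem_prodInv2_of_sq (hA : A ∈ ProdInv2 F m) {c d : F} (hcd : c * d = 1)
    (hne : c ≠ d) (h : aeval A ((X + C c) ^ 2 * (X + C d)) = 0) :
    aeval A ((X + C c) * (X + C d)) = 0 := by
  set p := (X + C c) ^ 2 * (X + C d) with hp
  have hC : C c * C d = 1 := by rw [← C_mul, hcd, C_1]
  have hrev : C d * p.reverse = (X + C d) ^ 2 * (X + C c) := by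
    rw [hp, sq, reverse_mul_of_domain, reverse_mul_of_domain, reverse_X_add_C, reverse_X_add_C]
    grind
  have hcomb : C (c - d) * ((X + C c) * (X + C d)) = p - C d * p.reverse := by
    rw [hrev, hp, C_sub]
    ring
  have hzero : (c - d) • aeval A ((X + C c) * (X + C d)) = 0 := by
    rw [← map_smul, ← C_mul', hcomb, map_sub, h, map_mul,
      aeval_reverse_eq_zero_of_mem_prodInv2 hA h, mul_zero, sub_zero]
  exact (smul_eq_zero.mp hzero).resolve_left (sub_ne_zero.mpr hne)

lemma inv_apply_eq_neg_of_transvection_mem {i j : Fin m} (hij : i ≠ j) (hA : A ∈ ProdInv2 F m)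
    (hAT : A * transvection i j 1 ∈ ProdInv2 F m) : A⁻¹ j i = -A j i := by
  have hT : (transvection i j (1 : F))⁻¹ = transvection i j (-1) :=
    inv_eq_right_inv (by rw [transvection_mul_transvection_same _ _ hij, add_neg_cancel,
      transvection_zero])
  have h := trace_inv_of_mem_prodInv2 hAT
  rw [Matrix.mul_inv_rev, hT, transvection, transvection, add_mul, mul_add, one_mul, mul_one,
    trace_add, trace_add, trace_inv_of_mem_prodInv2 hA, trace_single_mul, trace_mul_single] at h
  simpa [neg_eq_iff_eq_neg] using add_left_cancel h

end ProdInv2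

section UnitriangularTranslates

variable {F : Type*} [Field F] {m : ℕ}

/-- All the translates `A * U` of `A` by upper unitriangular matrices `U = 1 + N` are products of
two involutions; the theorem says that this fails for `C_g ⊕ C_{g̃}`. -/
def ProdInv2Translates (A : Matrix (Fin m) (Fin m) F) : Prop :=
  ∀ N : Matrix (Fin m) (Fin m) F, (∀ i j, j ≤ i → N i j = 0) → A * (1 + N) ∈ ProdInv2 F m

namespace ProdInv2Translates

variable {A : Matrix (Fin m) (Fin m) F}

lemma mem (h : ProdInv2Translates A) : A ∈ ProdInv2 F m := by
  simpa using h 0 fun _ _ _ ↦ rfl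

lemma inv_apply_eq_neg (h : ProdInv2Translates A) {i j : Fin m} (hij : i < j) :
    A⁻¹ j i = -A j i := by
  refine inv_apply_eq_neg_of_transvection_mem hij.ne h.mem (h _ fun k l hlk ↦ ?_)
  refine single_apply_of_ne (α := F) i j 1 k l ?_
  rintro ⟨rfl, rfl⟩
  exact hlk.not_gt hij

lemma inv_col_of_col (h : ProdInv2Translates A) {i j : Fin m} (hA : A.col i = Pi.single j 1) :
    A⁻¹.col j = Pi.single i 1 := by
  rw [← mulVec_single_one, ← hA, ← mulVec_single_one A, mulVec_mulVec,
    nonsing_inv_mul _ (isUnit_det_of_mem_prodInv2 h.mem), one_mulVec]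

lemma eq_of_col_shift (h : ProdInv2Translates A) {i j k : Fin m} (hjk : j < k)
    (hi : A.col i = Pi.single j 1) (hj : A.col j = Pi.single k 1) : i = k := by
  by_contra hik
  have hA : A k j = 1 := by simpa using congrFun hj k
  have hinv : A⁻¹ k j = 0 := by simpa [Ne.symm hik] using congrFun (h.inv_col_of_col hi) k
  have := h.inv_apply_eq_neg hjk
  simp [hA, hinv] at this

lemma eq_one_of_col (h : ProdInv2Translates A) {i j : Fin m} (hij : i < j) {a b : F}
    (hi : A.col i = Pi.single j 1) (hj : A.col j = Pi.single i (-a) + Pi.single j (-b)) :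
    a = 1 := by
  have hA : A j i = 1 := by simpa using congrFun hi j
  have hji : A⁻¹ j i = -1 := by rw [h.inv_apply_eq_neg hij, hA]
  have hjj : A⁻¹ j j = 0 := by simpa [hij.ne'] using congrFun (h.inv_col_of_col hi) j
  have hmul : A⁻¹ *ᵥ A.col j = Pi.single j 1 := by
    rw [← mulVec_single_one A, mulVec_mulVec,
      nonsing_inv_mul _ (isUnit_det_of_mem_prodInv2 h.mem), one_mulVec]
  simpa [hj, mulVec_add, mulVec_single, hji, hjj] using congrFun hmul j

end ProdInv2Translates

end UnitriangularTranslates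

section SizeFour

variable {F : Type*} [Field F]

-- The matrix is `[[Q, Q + d], [0, Q]]`, with `Q` the companion matrix of `(x + c) (x + d)`. Since
-- `Q + c` kills the corner `Q + d`, its Jordan form is `J₂(-c) ⊕ (-d) ⊕ (-d)`.
lemma doubled_companion_notMem_prodInv2 {c d : F} (hcd : c * d = 1) (hne : c ≠ d) :
    !![0, -1, d, -1; 1, -(c + d), 1, -c; 0, 0, 0, -1; 0, 0, 1, -(c + d)] ∉ ProdInv2 F 4 := by
  intro hM
  set M : Matrix (Fin 4) (Fin 4) F :=
    !![0, -1, d, -1; 1, -(c + d), 1, -c; 0, 0, 0, -1; 0, 0, 1, -(c + d)] with hM_def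
  have hadd (e : F) : aeval M (X + C e) =
      !![e, -1, d, -1; 1, e - (c + d), 1, -c; 0, 0, e, -1; 0, 0, 1, e - (c + d)] := by
    rw [map_add, aeval_X, aeval_C, hM_def, Matrix.algebraMap_eq_diagonal, add_comm]
    ext i j
    fin_cases i <;> fin_cases j <;> simp [sub_eq_add_neg]
  have hprod : aeval M ((X + C c) * (X + C d)) =
      (d - c) • !![0, 0, d, -1; 0, 0, 1, -c; 0, 0, 0, 0; 0, 0, 0, 0] := by
    rw [map_mul, hadd, hadd]
    ext i j
    fin_cases i <;> fin_cases j <;> simp <;> grind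
  have hsq : aeval M ((X + C c) ^ 2 * (X + C d)) = 0 := by
    rw [sq, mul_assoc, map_mul, hprod, hadd]
    ext i j
    fin_cases i <;> fin_cases j <;> simp <;> grind
  have hentry := congrFun₂ (aeval_eq_zero_of_mem_prodInv2_of_sq hM hcd hne hsq) 1 2
  rw [hprod] at hentry
  simp [sub_eq_zero, hne.symm] at hentry

lemma not_prodInv2Translates_of_mul_eq_one {b b' c d : F} (hcd : c * d = 1) (hne : c ≠ d) :
    ¬ ProdInv2Translates !![0, -1, 0, 0; 1, -b, 0, 0; 0, 0, 0, -1; 0, 0, 1, -b'] := by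
  intro h
  -- The upper right block is `P⁻¹ (Q + d)`, where `P = [[0, -1], [1, -b]]`.
  have hmem := h
    !![0, b - (c + d), 1 - b * d, b - c; 0, 0, -d, 1; 0, 0, 0, b' - (c + d); 0, 0, 0, 0]
    (fun i j hji ↦ by fin_cases i <;> fin_cases j <;> simp at hji ⊢)
  refine doubled_companion_notMem_prodInv2 hcd hne ?_
  convert hmem using 1
  rw [mul_add, mul_one]
  ext i j
  fin_cases i <;> fin_cases j <;> simp <;> ring

end SizeFour

section CompanionDirectSum

variable {F : Type*} [Field F] {n : ℕ}

/-- The direct sum `C_p ⊕ C_q` of two companion matrices of size `n`, indexed by `Fin (n + n)`. -/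
def companionDirectSum (n : ℕ) (p q : F[X]) : Matrix (Fin (n + n)) (Fin (n + n)) F :=
  reindex finSumFinEquiv finSumFinEquiv
    (fromBlocks (companionMatrix n p) 0 0 (companionMatrix n q))

lemma companionMatrix_col_of_succ (p : F[X]) {j k : Fin n} (hk : (k : ℕ) = j + 1) :
    (companionMatrix n p).col j = Pi.single k 1 := by
  ext i
  have hkn : (k : ℕ) ≠ n := k.isLt.ne
  simp [companionMatrix, hkn, ← hk, Pi.single_apply, Fin.ext_iff]

lemma companionDirectSum_col_castAdd (p q : F[X]) {j k : Fin n} (hk : (k : ℕ) = j + 1) :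
    (companionDirectSum n p q).col (Fin.castAdd n j) = Pi.single (Fin.castAdd n k) 1 := by
  ext i
  refine Fin.addCases (fun i ↦ ?_) (fun i ↦ ?_) i
  · simpa [companionDirectSum, Pi.single_apply] using
      congrFun (companionMatrix_col_of_succ p hk) i
  · have hik : Fin.natAdd n i ≠ Fin.castAdd n k :=
      Fin.ne_of_gt (k.isLt.trans_le (Nat.le_add_right n i))
    simp [-Fin.natAdd_eq_addNat, companionDirectSum, hik]

lemma companionDirectSum_two (p q : F[X]) :
    companionDirectSum 2 p q =
      (!![0, -p.coeff 0, 0, 0; 1, -p.coeff 1, 0, 0; 0, 0, 0, -q.coeff 0; 0, 0, 1, -q.coeff 1] :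
        Matrix (Fin 4) (Fin 4) F) := by
  have h0 : (finSumFinEquiv (m := 2) (n := 2)).symm 0 = .inl 0 := rfl
  have h1 : (finSumFinEquiv (m := 2) (n := 2)).symm 1 = .inl 1 := rfl
  have h2 : (finSumFinEquiv (m := 2) (n := 2)).symm 2 = .inr 0 := rfl
  have h3 : (finSumFinEquiv (m := 2) (n := 2)).symm 3 = .inr 1 := rfl
  ext i j
  rw [companionDirectSum, reindex_apply, submatrix_apply]
  fin_cases i <;> fin_cases j <;> simp [h0, h1, h2, h3, companionMatrix]

lemma not_prodInv2Translates_companionDirectSum_of_two_lt (hn : 2 < n) (p q : F[X]) :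
    ¬ ProdInv2Translates (companionDirectSum n p q) := by
  intro h
  let k₀ : Fin n := ⟨0, by omega⟩
  let k₁ : Fin n := ⟨1, by omega⟩
  let k₂ : Fin n := ⟨2, hn⟩
  have h01 := companionDirectSum_col_castAdd p q (j := k₀) (k := k₁) rfl
  have h12 := companionDirectSum_col_castAdd p q (j := k₁) (k := k₂) rfl
  have h02 := h.eq_of_col_shift (by simp [k₁, k₂, Fin.lt_def]) h01 h12
  simp [k₀, k₂, Fin.ext_iff] at h02

lemma coeff_zero_eq_one_of_prodInv2Translates {p q : F[X]}
    (h : ProdInv2Translates (companionDirectSum 2 p q)) : p.coeff 0 = 1 ∧ q.coeff 0 = 1 := by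
  rw [companionDirectSum_two] at h
  constructor
  · refine h.eq_one_of_col (i := 0) (j := 1) (b := p.coeff 1) (by decide) ?_ ?_ <;>
      ext i <;> fin_cases i <;> simp
  · refine h.eq_one_of_col (i := 2) (j := 3) (b := q.coeff 1) (by decide) ?_ ?_ <;>
      ext i <;> fin_cases i <;> simp

end CompanionDirectSum

theorem stmt3_general {F : Type*} [Field F] {n : ℕ} (hn : 2 ≤ n) (p q : F[X])
    (hpq : n = 2 → p.coeff 0 = 1 → q.coeff 0 = 1 → ∃ c d : F, c * d = 1 ∧ c ≠ d) :
    ∃ N : Matrix (Fin (n + n)) (Fin (n + n)) F,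
      (∀ i j : Fin (n + n), (j : ℕ) ≤ (i : ℕ) → N i j = 0) ∧
      companionDirectSum n p q * (1 + N) ∉ ProdInv2 F (n + n) := by
  by_contra! hcon
  have h : ProdInv2Translates (companionDirectSum n p q) := hcon
  rcases hn.eq_or_lt' with rfl | hn
  · obtain ⟨hp, hq⟩ := coeff_zero_eq_one_of_prodInv2Translates h
    obtain ⟨c, d, hcd, hne⟩ := hpq rfl hp hq
    rw [companionDirectSum_two, hp, hq] at h
    exact not_prodInv2Translates_of_mul_eq_one hcd hne h
  · exact not_prodInv2Translates_companionDirectSum_of_two_lt hn p q h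

theorem stmt3 (F : Type*) [Field F] (n : ℕ) (hn : 2 ≤ n) (g : Polynomial F)
    (hg : g.Monic) (hdeg : g.natDegree = n) (hg0 : g.coeff 0 ≠ 0)
    (hnotpow : ¬ ∃ (p : Polynomial F) (k : ℕ), p.Monic ∧ Irreducible p ∧
      p = reciprocalPoly p ∧ 1 ≤ k ∧ g = p ^ k) :
    ∃ N : Matrix (Fin (n + n)) (Fin (n + n)) F,
      (∀ i j : Fin (n + n), (j : ℕ) ≤ (i : ℕ) → N i j = 0) ∧
      (Matrix.reindex finSumFinEquiv finSumFinEquiv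
          (Matrix.fromBlocks (companionMatrix n g) 0 0
            (companionMatrix n (reciprocalPoly g)))) * (1 + N) ∉ ProdInv2 F (n + n) :=
  stmt3_general hn g (reciprocalPoly g) fun hn2 hg1 _ ↦
    exists_mul_eq_one_ne_of_not_pow hg (hdeg.trans hn2) hg1 hnotpow
end

section
/- Let F be a field, let n ≥ 3, and let f(x) be a monic polynomial of degree n over F with f(0) ≠ 0 such that f is a power of a self-reciprocal irreducible monic polynomial, and let C_f ∈ M_n(F) be its companion matrix (so C_f ∈ B_n). Then there exists a strictly upper triangular matrix N ∈ M_n(F) such that C_f(I + N) ∉ B_n. -/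
open Matrix Polynomial

/-!
The characteristic polynomial of a product of two involutions is self-reciprocal, since the inverse
`J₂ * J₁` of `J₁ * J₂` has the same characteristic polynomial. Right multiplication by `I + N` with
`N` strictly upper triangular can turn `C_f` into the companion matrix of any monic `g` of the same
degree `n` and constant term, so it suffices that some such `g` is not self-reciprocal. For `n ≥ 3`,
`g = xⁿ + x + f(0)` has a nonzero coefficient at `x` but none at `xⁿ⁻¹`.
-/

section Companion

variable {F : Type*} [Field F]

theorem companionMatrix_eq_leftMulMatrix {f : F[X]} (hf : f.Monic) :
    companionMatrix f.natDegree f =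
      Algebra.leftMulMatrix (AdjoinRoot.powerBasis hf.ne_zero).basis
        (AdjoinRoot.powerBasis hf.ne_zero).gen := by
  rw [PowerBasis.leftMulMatrix, PowerBasis.minpolyGen_eq,
    AdjoinRoot.minpoly_powerBasis_gen_of_monic hf]
  ext i j
  have hi : (i : ℕ) < f.natDegree := i.isLt
  change companionMatrix f.natDegree f i j =
    if (j : ℕ) + 1 = f.natDegree then -f.coeff i else if (i : ℕ) = j + 1 then 1 else 0
  rw [companionMatrix]
  split_ifs <;> first | omega | simp

theorem charpoly_companionMatrix {f : F[X]} (hf : f.Monic) :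
    (companionMatrix f.natDegree f).charpoly = f := by
  rw [companionMatrix_eq_leftMulMatrix hf]
  exact (charpoly_leftMulMatrix (AdjoinRoot.powerBasis hf.ne_zero)).trans
    (AdjoinRoot.minpoly_powerBasis_gen_of_monic hf)

theorem companionMatrix_mul_apply_zero {m : ℕ} (f : F[X])
    (M : Matrix (Fin (m + 1)) (Fin (m + 1)) F) (j : Fin (m + 1)) :
    (companionMatrix (m + 1) f * M) 0 j = -f.coeff 0 * M (Fin.last m) j := by
  simp [mul_apply, companionMatrix, Fin.sum_univ_castSucc, Fin.is_lt, Nat.ne_of_lt]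

theorem companionMatrix_mul_apply_succ {m : ℕ} (f : F[X])
    (M : Matrix (Fin (m + 1)) (Fin (m + 1)) F) (i : Fin m) (j : Fin (m + 1)) :
    (companionMatrix (m + 1) f * M) i.succ j =
      M i.castSucc j - f.coeff (i + 1) * M (Fin.last m) j := by
  simp [mul_apply, companionMatrix, add_mul, Fin.sum_univ_castSucc, Fin.val_inj, Nat.ne_of_lt,
    sub_eq_add_neg]

/-- The strictly upper triangular `N` with `C_f (I + N) = C_g`, for `f` and `g` with the same
coefficients in degrees `0` and `n`. Since `C_f` shifts rows down by one, row `i` of the last column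
corrects the coefficient of degree `i + 1`. -/
noncomputable def companionShear (n : ℕ) (f g : F[X]) : Matrix (Fin n) (Fin n) F :=
  of fun i j => if (j : ℕ) + 1 = n then (f - g).coeff (i + 1) else 0

theorem companionShear_apply_eq_zero_of_le {n : ℕ} {f g : F[X]} (hfg : f.coeff n = g.coeff n)
    {i j : Fin n} (hji : (j : ℕ) ≤ i) : companionShear n f g i j = 0 := by
  rw [companionShear, of_apply]
  split_ifs with hj
  · have hi : (i : ℕ) + 1 = n := by omega
    rw [hi, coeff_sub, hfg, sub_self]
  · rfl

theorem companionMatrix_mul_one_add_companionShear {n : ℕ} {f g : F[X]}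
    (h0 : f.coeff 0 = g.coeff 0) (hn : f.coeff n = g.coeff n) :
    companionMatrix n f * (1 + companionShear n f g) = companionMatrix n g := by
  cases n with
  | zero => exact Subsingleton.elim _ _
  | succ m =>
    have hlast (j : Fin (m + 1)) : companionShear (m + 1) f g (Fin.last m) j = 0 :=
      companionShear_apply_eq_zero_of_le hn (Fin.le_last j)
    rw [mul_add, mul_one]
    ext i j
    rw [Matrix.add_apply]
    induction i using Fin.cases with
    | zero =>
      rw [companionMatrix_mul_apply_zero, hlast, mul_zero, add_zero]
      simp [companionMatrix, h0]
    | succ i =>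
      rw [companionMatrix_mul_apply_succ, hlast, mul_zero, sub_zero]
      simp only [companionMatrix, companionShear, of_apply, coeff_sub, Fin.val_succ,
        Fin.val_castSucc]
      split_ifs <;> ring

end Companion

section Reciprocal

variable {F : Type*} [Field F]

theorem charpoly_inv_eq_reciprocalPoly {ι : Type*} [Fintype ι] [DecidableEq ι]
    {A : Matrix ι ι F} (hA : IsUnit A) : A⁻¹.charpoly = reciprocalPoly A.charpoly := by
  have hdet : (-1) ^ Fintype.card ι * A.det⁻¹ = (A.charpoly.coeff 0)⁻¹ := by
    rw [det_eq_sign_charpoly_coeff, mul_inv, ← mul_assoc, ← inv_pow, ← mul_pow]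
    simp
  rw [charpoly_inv A hA, reciprocalPoly, reverse_charpoly, ← hdet]
  simp

theorem charpoly_eq_reciprocalPoly_of_mem_prodInv2 {n : ℕ} {A : Matrix (Fin n) (Fin n) F}
    (hA : A ∈ ProdInv2 F n) : A.charpoly = reciprocalPoly A.charpoly := by
  obtain ⟨J₁, J₂, h₁, h₂, rfl⟩ := hA
  have hmul : J₁ * J₂ * (J₂ * J₁) = 1 := by
    rw [mul_assoc, ← mul_assoc J₂, h₂, one_mul, h₁]
  rw [← charpoly_inv_eq_reciprocalPoly (.of_mul_eq_one _ hmul), inv_eq_right_inv hmul,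
    charpoly_mul_comm]

theorem companionMatrix_notMem_prodInv2 {g : F[X]} (hg : g.Monic) (hrec : g ≠ reciprocalPoly g) :
    companionMatrix g.natDegree g ∉ ProdInv2 F g.natDegree := fun h =>
  hrec (by simpa only [charpoly_companionMatrix hg] using
    charpoly_eq_reciprocalPoly_of_mem_prodInv2 h)

theorem coeff_one_reciprocalPoly (g : F[X]) :
    (reciprocalPoly g).coeff 1 = (g.coeff 0)⁻¹ * g.nextCoeff := by
  rw [reciprocalPoly, coeff_C_mul, coeff_one_reverse]

theorem trinomial_ne_reciprocalPoly {n : ℕ} (hn : 3 ≤ n) (a : F) :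
    trinomial 0 1 n a 1 1 ≠ reciprocalPoly (trinomial 0 1 n a 1 1) := by
  have hdeg : (trinomial 0 1 n a 1 (1 : F)).natDegree = n :=
    trinomial_natDegree one_pos (by omega) one_ne_zero
  have hnext : (trinomial 0 1 n a 1 (1 : F)).nextCoeff = 0 := by
    have h₀ : n - 1 ≠ 0 := by omega
    have h₁ : 1 ≠ n - 1 := by omega
    have h₂ : n - 1 ≠ n := by omega
    rw [nextCoeff_of_natDegree_pos ((show 0 < n by omega).trans_eq hdeg.symm), hdeg]
    simp [trinomial_def, coeff_C, coeff_X, coeff_X_pow, h₀, h₁, h₂]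
  intro h
  have hcoeff := congrArg (coeff · 1) h
  simp only [coeff_one_reciprocalPoly, hnext, mul_zero,
    trinomial_middle_coeff one_pos (show 1 < n by omega)] at hcoeff
  exact one_ne_zero hcoeff

end Reciprocal

theorem stmt4_general {F : Type*} [Field F] {n : ℕ} (hn : 3 ≤ n) {f : F[X]}
    (hf : f.Monic) (hdeg : f.natDegree = n) :
    ∃ N : Matrix (Fin n) (Fin n) F,
      (∀ i j : Fin n, (j : ℕ) ≤ (i : ℕ) → N i j = 0) ∧
      companionMatrix n f * (1 + N) ∉ ProdInv2 F n := by
  set g : F[X] := trinomial 0 1 n (f.coeff 0) 1 1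
  have hgmonic : g.Monic := trinomial_monic one_pos (by omega)
  have hgdeg : g.natDegree = n := trinomial_natDegree one_pos (by omega) one_ne_zero
  have h0 : f.coeff 0 = g.coeff 0 := (trinomial_trailing_coeff' one_pos (by omega)).symm
  have hlead : f.coeff n = g.coeff n := by
    rw [← hdeg, hf.coeff_natDegree, hdeg, ← hgdeg, hgmonic.coeff_natDegree]
  refine ⟨companionShear n f g, fun _ _ => companionShear_apply_eq_zero_of_le hlead, ?_⟩
  rw [companionMatrix_mul_one_add_companionShear h0 hlead, ← hgdeg]
  exact companionMatrix_notMem_prodInv2 hgmonic (trinomial_ne_reciprocalPoly hn _)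

theorem stmt4 (F : Type*) [Field F] (n : ℕ) (hn : 3 ≤ n) (f : Polynomial F)
    (hf : f.Monic) (hdeg : f.natDegree = n) (hf0 : f.coeff 0 ≠ 0)
    (hpow : ∃ (p : Polynomial F) (k : ℕ), p.Monic ∧ Irreducible p ∧
      p = reciprocalPoly p ∧ 1 ≤ k ∧ f = p ^ k) :
    ∃ N : Matrix (Fin n) (Fin n) F,
      (∀ i j : Fin n, (j : ℕ) ≤ (i : ℕ) → N i j = 0) ∧
      (companionMatrix n f) * (1 + N) ∉ ProdInv2 F n :=
  stmt4_general hn hf hdeg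
end

section
/- Let F be a field with char(F) ≠ 2, let a₁ ∈ F, and let A ∈ M_2(F) be the matrix with rows (0, −1) and (1, −a₁) (so A ∈ B_2). Then for every nonzero r ∈ F there exists a matrix X ∈ B_2 with trace(X) = 0 such that rAX ∉ B_2. -/
open Matrix

/-!
In dimension two, the involutions are `1`, `-1` and the matrices of trace `0` and determinant `-1`.
Hence a product of two involutions has determinant `1` or trace `0`, while every matrix of trace `0`
and determinant `±1` is such a product. If `A` is not scalar and `2 ≠ 0`, then for each `ε` some
traceless `X` of determinant `ε` satisfies `trace (A * X) ≠ 0`. Choosing `ε = ±1` with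
`det A * ε ≠ 1` makes `A * X` a matrix of determinant `≠ 1` and trace `≠ 0`. Applied to `r • A`,
this absorbs the scalar factor `r`.
-/

theorem notMem_range_scalar_of_apply_ne_zero {n R : Type*} [Fintype n] [DecidableEq n] [Semiring R]
    {M : Matrix n n R} {i j : n} (hij : i ≠ j) (hM : M i j ≠ 0) : M ∉ Set.range (scalar n) := by
  rintro ⟨c, rfl⟩
  exact hM (by simp [hij])

theorem mul_self_fin_two {R : Type*} [CommRing R] (M : Matrix (Fin 2) (Fin 2) R) :
    M * M = M.trace • M - M.det • 1 := by
  nontriviality R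
  have cayley_hamilton := M.aeval_self_charpoly
  simp only [charpoly_fin_two, map_add, map_sub, map_mul, map_pow, Polynomial.aeval_X,
    Polynomial.aeval_C, Algebra.algebraMap_eq_smul_one, smul_one_mul] at cayley_hamilton
  rw [← sub_eq_zero, ← cayley_hamilton, sq]
  abel

section Field

variable {F : Type*} [Field F]

theorem mul_self_eq_one_iff_fin_two {J : Matrix (Fin 2) (Fin 2) F} :
    J * J = 1 ↔ J = 1 ∨ J = -1 ∨ J.trace = 0 ∧ J.det = -1 := by
  refine ⟨fun hJ ↦ ?_, ?_⟩
  · have smul_eq : J.trace • J = (1 + J.det) • (1 : Matrix (Fin 2) (Fin 2) F) := by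
      rw [add_smul, one_smul, ← sub_eq_iff_eq_add, ← mul_self_fin_two, hJ]
    by_cases htr : J.trace = 0
    · have hdet : 1 + J.det = 0 := by simpa [htr] using smul_eq.symm
      exact .inr (.inr ⟨htr, by linear_combination hdet⟩)
    · obtain ⟨c, rfl⟩ : ∃ c : F, J = c • 1 :=
        ⟨J.trace⁻¹ * (1 + J.det), by rw [mul_smul, ← smul_eq, inv_smul_smul₀ htr]⟩
      have hc : c * c = 1 := by simpa using congr_fun₂ hJ 0 0
      rcases mul_self_eq_one_iff.mp hc with rfl | rfl <;> simp
  · rintro (rfl | rfl | ⟨htr, hdet⟩)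
    · simp
    · simp
    · simp [mul_self_fin_two, htr, hdet]

theorem trace_eq_zero_of_mem_prodInv2 {M : Matrix (Fin 2) (Fin 2) F} (hM : M ∈ ProdInv2 F 2)
    (hdet : M.det ≠ 1) : M.trace = 0 := by
  obtain ⟨J, K, hJ, hK, rfl⟩ := hM
  rcases mul_self_eq_one_iff_fin_two.mp hJ with rfl | rfl | ⟨htrJ, hdetJ⟩ <;>
    rcases mul_self_eq_one_iff_fin_two.mp hK with rfl | rfl | ⟨htrK, hdetK⟩ <;>
    simp_all [det_neg]

theorem exists_trace_eq_zero_det_eq_neg_one_trace_mul_eq_zero (A : Matrix (Fin 2) (Fin 2) F) :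
    ∃ K : Matrix (Fin 2) (Fin 2) F, K.trace = 0 ∧ K.det = -1 ∧ (A * K).trace = 0 := by
  by_cases h₁₀ : A 1 0 = 0
  · by_cases h₀₁ : A 0 1 = 0
    · exact ⟨!![0, 1; 1, 0], by simp [trace_fin_two], by simp,
        by simp [trace_fin_two, mul_apply, h₁₀, h₀₁]⟩
    · refine ⟨!![1, 0; (A 1 1 - A 0 0) / A 0 1, -1], by simp [trace_fin_two], by simp, ?_⟩
      simp [trace_fin_two, mul_apply, mul_div_cancel₀, h₁₀, h₀₁]
  · refine ⟨!![1, (A 1 1 - A 0 0) / A 1 0; 0, -1], by simp [trace_fin_two], by simp, ?_⟩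
    simp only [trace_fin_two, mul_apply, Fin.sum_univ_two, of_apply, cons_val', cons_val_zero,
      cons_val_one, cons_val_fin_one, mul_div_cancel₀ _ h₁₀]
    ring

theorem mem_prodInv2_of_trace_eq_zero {X : Matrix (Fin 2) (Fin 2) F} (htr : X.trace = 0)
    (hdet : X.det = 1 ∨ X.det = -1) : X ∈ ProdInv2 F 2 := by
  rcases hdet with hdet | hdet
  · obtain ⟨K, htrK, hdetK, htrXK⟩ := exists_trace_eq_zero_det_eq_neg_one_trace_mul_eq_zero X
    have hK : K * K = 1 := mul_self_eq_one_iff_fin_two.mpr (.inr (.inr ⟨htrK, hdetK⟩))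
    have hXK : X * K * (X * K) = 1 :=
      mul_self_eq_one_iff_fin_two.mpr (.inr (.inr ⟨htrXK, by rw [det_mul, hdet, hdetK, one_mul]⟩))
    exact ⟨X * K, K, hXK, hK, by rw [mul_assoc, hK, mul_one]⟩
  · have hX : X * X = 1 := mul_self_eq_one_iff_fin_two.mpr (.inr (.inr ⟨htr, hdet⟩))
    exact ⟨X, 1, hX, one_mul 1, (mul_one X).symm⟩

theorem exists_trace_eq_zero_det_eq_trace_mul_ne_zero (h2 : (2 : F) ≠ 0)
    {A : Matrix (Fin 2) (Fin 2) F} (hA : A ∉ Set.range (scalar (Fin 2))) (ε : F) :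
    ∃ X : Matrix (Fin 2) (Fin 2) F, X.trace = 0 ∧ X.det = ε ∧ (A * X).trace ≠ 0 := by
  by_contra! h
  -- These three matrices span the traceless ones, so `A` is orthogonal to all of them
  -- under the trace form.
  have h₁ := h !![0, 1; -ε, 0] (by simp [trace_fin_two]) (by simp)
  have h₂ := h !![1, 1; -1 - ε, -1] (by simp [trace_fin_two]) (by simp)
  have h₃ := h !![1, -1; 1 + ε, -1] (by simp [trace_fin_two]) (by simp)
  simp only [trace_fin_two, mul_apply, Fin.sum_univ_two, of_apply, cons_val', cons_val_zero,
    cons_val_one, cons_val_fin_one] at h₁ h₂ h₃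
  have h_diag : A 1 1 = A 0 0 := mul_left_cancel₀ h2 (by linear_combination -h₂ - h₃)
  have h₀₁ : A 0 1 = 0 := by linear_combination h₁ - h₂ - h_diag
  have h₁₀ : A 1 0 = 0 := by linear_combination h₁ + ε * h₀₁
  refine hA ⟨A 0 0, ?_⟩
  ext i j
  fin_cases i <;> fin_cases j <;> simp [h_diag, h₀₁, h₁₀]

theorem stmt5_general (hchar : ringChar F ≠ 2) {A : Matrix (Fin 2) (Fin 2) F}
    (hA : A ∉ Set.range (scalar (Fin 2))) :
    ∃ X ∈ ProdInv2 F 2, X.trace = 0 ∧ A * X ∉ ProdInv2 F 2 := by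
  obtain ⟨ε, hε, hdetA⟩ : ∃ ε : F, (ε = 1 ∨ ε = -1) ∧ A.det * ε ≠ 1 := by
    by_cases h : A.det = 1
    · exact ⟨-1, .inr rfl, by simpa [h] using Ring.neg_one_ne_one_of_char_ne_two hchar⟩
    · exact ⟨1, .inl rfl, by rwa [mul_one]⟩
  obtain ⟨X, htrX, rfl, htrAX⟩ :=
    exists_trace_eq_zero_det_eq_trace_mul_ne_zero (Ring.two_ne_zero hchar) hA ε
  exact ⟨X, mem_prodInv2_of_trace_eq_zero htrX hε, htrX,
    fun hAX ↦ htrAX (trace_eq_zero_of_mem_prodInv2 hAX (by rwa [det_mul]))⟩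

end Field

theorem stmt5 (F : Type*) [Field F] (hchar : ringChar F ≠ 2) (a₁ : F)
    (A : Matrix (Fin 2) (Fin 2) F) (hA : A = !![0, -1; 1, -a₁]) :
    ∀ r : F, r ≠ 0 → ∃ X ∈ ProdInv2 F 2, Matrix.trace X = 0 ∧
      r • (A * X) ∉ ProdInv2 F 2 := by
  intro r hr
  have apply_ne_zero : (r • A) 1 0 ≠ 0 := by simpa [hA] using hr
  simpa only [smul_mul_assoc] using
    stmt5_general hchar (notMem_range_scalar_of_apply_ne_zero one_ne_zero apply_ne_zero)
end

section
/- Let F be a field with char(F) ≠ 2, let a₁ ∈ F, let α ∈ {−1, 1}, and let A ∈ M_3(F) be the block-diagonal matrix B ⊕ (α), where B ∈ M_2(F) has rows (0, −1) and (1, −a₁) (so A ∈ B_3). Then for every nonzero r ∈ F there exists a matrix X ∈ B_3 with trace(X) = 0 such that rAX ∉ B_3. -/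
open Matrix

/-!
A product `J * K` of two involutions has inverse `K * J`, hence the same trace as its inverse; in
terms of the adjugate, `tr (adj M) = det M * tr M` for `M = J * K`. So it suffices to choose a
product `X` of two involutions with `tr X = 0` such that `A * X` has trace zero while its adjugate
has nonzero trace; both properties survive scaling by `r ≠ 0`.
-/

section CommRing

variable {R : Type*} [CommRing R]

theorem adjugate_mul_of_mul_self_eq_one {ι : Type*} [Fintype ι] [DecidableEq ι]
    {J K : Matrix ι ι R} (hJ : J * J = 1) (hK : K * K = 1) :
    adjugate (J * K) = (J * K).det • (K * J) := by
  have hinv : J * K * (K * J) = 1 := by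
    rw [Matrix.mul_assoc, ← Matrix.mul_assoc K, hK, Matrix.one_mul, hJ]
  calc adjugate (J * K) = adjugate (J * K) * (J * K) * (K * J) := by
        rw [Matrix.mul_assoc, hinv, Matrix.mul_one]
    _ = (J * K).det • (K * J) := by rw [adjugate_mul, Matrix.smul_mul, Matrix.one_mul]

/-- A family of trace-zero products of two involutions, from which the matrix `X` is chosen. The
trace of `A * X` varies with the parameter `s`, and `s = a₁` makes it vanish. -/
def traceZeroProdInv (s : R) : Matrix (Fin 3) (Fin 3) R :=
  !![-1, s, -1; 0, 1, 0; 1, 0, 0]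

theorem trace_traceZeroProdInv (s : R) : (traceZeroProdInv s).trace = 0 := by
  simp [traceZeroProdInv, trace_fin_three]

theorem mul_traceZeroProdInv (a₁ α s : R) :
    !![0, -1, 0; 1, -a₁, 0; 0, 0, α] * traceZeroProdInv s =
      !![0, -1, 0; -1, s - a₁, -1; α, 0, 0] := by
  simp [traceZeroProdInv, sub_eq_add_neg]

theorem trace_mul_traceZeroProdInv (a₁ α s : R) :
    (!![0, -1, 0; 1, -a₁, 0; 0, 0, α] * traceZeroProdInv s).trace = s - a₁ := by
  rw [mul_traceZeroProdInv]
  simp [trace_fin_three]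

theorem trace_adjugate_mul_traceZeroProdInv (a₁ α s : R) :
    (adjugate (!![0, -1, 0; 1, -a₁, 0; 0, 0, α] * traceZeroProdInv s)).trace = -1 := by
  rw [mul_traceZeroProdInv]
  simp [adjugate_fin_three, trace_fin_three]

end CommRing

section Field

variable {F : Type*} [Field F]

theorem trace_adjugate_of_mem_prodInv2 {n : ℕ} {M : Matrix (Fin n) (Fin n) F}
    (hM : M ∈ ProdInv2 F n) : (adjugate M).trace = M.det * M.trace := by
  obtain ⟨J, K, hJ, hK, rfl⟩ := hM
  rw [adjugate_mul_of_mul_self_eq_one hJ hK, trace_smul, smul_eq_mul, trace_mul_comm K J]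

theorem smul_notMem_prodInv2 {n : ℕ} {M : Matrix (Fin n) (Fin n) F} (htr : M.trace = 0)
    (hadj : (adjugate M).trace ≠ 0) {r : F} (hr : r ≠ 0) : r • M ∉ ProdInv2 F n := by
  intro hmem
  have hzero : r ^ (n - 1) * (adjugate M).trace = 0 := by
    simpa only [adjugate_smul, Fintype.card_fin, trace_smul, smul_eq_mul, htr, mul_zero]
      using trace_adjugate_of_mem_prodInv2 hmem
  exact mul_ne_zero (pow_ne_zero _ hr) hadj hzero

theorem traceZeroProdInv_mem_prodInv2 (s : F) : traceZeroProdInv s ∈ ProdInv2 F 3 := by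
  -- Conjugation by the swap of the first and third coordinates inverts `traceZeroProdInv s`.
  refine ⟨!![0, 0, 1; 0, 1, 0; 1, 0, 0], !![1, 0, 0; 0, 1, 0; -1, s, -1], ?_, ?_, ?_⟩ <;>
    simp [traceZeroProdInv, one_fin_three]

end Field

theorem stmt6_general {F : Type*} [Field F] (a₁ α : F) {r : F} (hr : r ≠ 0) :
    ∃ X ∈ ProdInv2 F 3, Matrix.trace X = 0 ∧
      r • (!![0, -1, 0; 1, -a₁, 0; 0, 0, α] * X) ∉ ProdInv2 F 3 := by
  refine ⟨traceZeroProdInv a₁, traceZeroProdInv_mem_prodInv2 a₁, trace_traceZeroProdInv a₁,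
    smul_notMem_prodInv2 ?_ ?_ hr⟩
  · rw [trace_mul_traceZeroProdInv, sub_self]
  · rw [trace_adjugate_mul_traceZeroProdInv]
    exact neg_ne_zero.mpr one_ne_zero

theorem stmt6 (F : Type*) [Field F] (hchar : ringChar F ≠ 2) (a₁ α : F)
    (hα : α = 1 ∨ α = -1)
    (A : Matrix (Fin 3) (Fin 3) F) (hA : A = !![0, -1, 0; 1, -a₁, 0; 0, 0, α]) :
    ∀ r : F, r ≠ 0 → ∃ X ∈ ProdInv2 F 3, Matrix.trace X = 0 ∧
      r • (A * X) ∉ ProdInv2 F 3 := by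
  subst hA
  exact fun r hr ↦ stmt6_general a₁ α hr
end

section
/- Let F be a field with char(F) ≠ 2, let n ≥ 2, and let T : M_n(F) → M_n(F) be a bijective linear map such that T(B_n) ⊆ B_n. Suppose there exist a nonzero scalar r ∈ F and an invertible matrix P ∈ M_n(F) such that either T(X) = r·T(I)·P·X·P⁻¹ for all X ∈ M_n(F) with trace(X) = 0, or T(X) = r·T(I)·P·Xᵗ·P⁻¹ for all X ∈ M_n(F) with trace(X) = 0. Then T(I) = I or T(I) = −I. -/
open Matrix

/-!
A product `X = J * K` of two involutions has `X⁻¹ = K * J`, hence `trace X = trace X⁻¹`. Put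
`A = T 1`. After absorbing the transpose into `T`, the matrix `A * (s + r * (X - s))` is a product
of two involutions for every such `X` of trace `s * n`. Taking for `X` the Cayley transform of a
nilpotent `M` and comparing traces gives linear relations between the entries of `A` and `A⁻¹`.
If `M` is an elementary nilpotent, they say that `A + A⁻¹` has no off-diagonal entries; if `M`
is a nilpotent Jordan block of size three, which needs `n ≥ 3`, they say the same of `A⁻¹`. For
`n = 2`, determinants give `r ^ 2 = 1`, and then `A` is trace-orthogonal to the involutions of
trace zero, which again kills its off-diagonal entries. All this is invariant under conjugation
of `A`, and a matrix all of whose conjugates are diagonal is scalar. A scalar product of two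
involutions squares to `1`.
-/

/-- `a` is a product of two involutions, where `1` counts as an involution. This is membership in
`ProdInv2`, in an arbitrary monoid. -/
def IsInvolutionProduct {M : Type*} [Monoid M] (a : M) : Prop :=
  ∃ j k : M, j * j = 1 ∧ k * k = 1 ∧ a = j * k

namespace IsInvolutionProduct

section Monoid

variable {M N : Type*} [Monoid M] [Monoid N] {a d : M}

theorem of_mul_self_eq_one (ha : a * a = 1) : IsInvolutionProduct a :=
  ⟨a, 1, ha, one_mul 1, (mul_one a).symm⟩

theorem of_conj_mul_self_eq_one (hd : d * d = 1) (ha : d * a * d * a = 1) :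
    IsInvolutionProduct a :=
  ⟨d, d * a, hd, by rw [← mul_assoc, ha], by rw [← mul_assoc, hd, one_mul]⟩

theorem map (ha : IsInvolutionProduct a) (f : M →* N) : IsInvolutionProduct (f a) := by
  obtain ⟨j, k, hj, hk, rfl⟩ := ha
  exact ⟨f j, f k, by rw [← map_mul, hj, map_one], by rw [← map_mul, hk, map_one], map_mul f j k⟩

theorem units_conj (ha : IsInvolutionProduct a) (u : Mˣ) :
    IsInvolutionProduct (u * a * ↑u⁻¹) :=
  ha.map (MulDistribMulAction.toMonoidHom M (ConjAct.toConjAct u))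

theorem mul_self_eq_one_of_central (ha : IsInvolutionProduct a) (hcomm : ∀ b, Commute a b) :
    a * a = 1 := by
  obtain ⟨j, k, hj, hk, rfl⟩ := ha
  calc j * k * (j * k) = j * (j * k) * k := by rw [← mul_assoc, (hcomm j).eq]
    _ = j * j * (k * k) := by simp only [mul_assoc]
    _ = 1 := by rw [hj, hk, one_mul]

end Monoid

-- The element is the Cayley transform `(1 + m) * (1 - m)⁻¹`, which conjugation by `d` inverts.
theorem cayley {S : Type*} [Ring S] {d m : S} (hd : d * d = 1) (hdm : d * m = -(m * d))
    (hm : m ^ 3 = 0) : IsInvolutionProduct (1 + 2 * (m + m ^ 2)) := by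
  have hconj : d * (1 + 2 * (m + m ^ 2)) * d = 1 + 2 * (-m + m ^ 2) := by
    have hdmm : d * m ^ 2 = m ^ 2 * d := by
      rw [pow_two, ← mul_assoc, hdm, neg_mul, mul_assoc, hdm, mul_neg, neg_neg, mul_assoc]
    calc d * (1 + 2 * (m + m ^ 2)) * d = (d + 2 * (d * m + d * m ^ 2)) * d := by noncomm_ring
      _ = (1 + 2 * (-m + m ^ 2)) * (d * d) := by rw [hdm, hdmm]; noncomm_ring
      _ = 1 + 2 * (-m + m ^ 2) := by rw [hd, mul_one]
  apply of_conj_mul_self_eq_one hd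
  calc d * (1 + 2 * (m + m ^ 2)) * d * (1 + 2 * (m + m ^ 2))
      = 1 + 4 * m ^ 3 * m := by rw [hconj]; noncomm_ring
    _ = 1 := by rw [hm, mul_zero, zero_mul, add_zero]

section Matrix

variable {ι R : Type*} [Fintype ι] [DecidableEq ι] [CommRing R] {A : Matrix ι ι R}

theorem transpose (hA : IsInvolutionProduct A) : IsInvolutionProduct Aᵀ := by
  obtain ⟨J, K, hJ, hK, rfl⟩ := hA
  exact ⟨Kᵀ, Jᵀ, by rw [← transpose_mul, hK, transpose_one],
    by rw [← transpose_mul, hJ, transpose_one], transpose_mul J K⟩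

theorem trace_inv (hA : IsInvolutionProduct A) : trace A⁻¹ = trace A := by
  obtain ⟨J, K, hJ, hK, rfl⟩ := hA
  rw [Matrix.mul_inv_rev, inv_eq_left_inv hJ, inv_eq_left_inv hK, trace_mul_comm]

theorem det_mul_self (hA : IsInvolutionProduct A) : A.det * A.det = 1 :=
  (hA.map detMonoidHom).mul_self_eq_one_of_central fun _ => Commute.all _ _

theorem eq_one_or_eq_neg_one_of_scalar [IsDomain R] (hA : IsInvolutionProduct A)
    (hscalar : A ∈ Set.range (scalar ι)) : A = 1 ∨ A = -1 := by
  obtain ⟨c, rfl⟩ := hscalar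
  cases isEmpty_or_nonempty ι
  · exact .inl (Subsingleton.elim _ _)
  have hc : c * c = 1 := by
    rw [← scalar_inj (n := ι), map_mul, map_one,
      hA.mul_self_eq_one_of_central (scalar_commute c (Commute.all c))]
  rcases mul_self_eq_one_iff.mp hc with rfl | rfl
  · exact .inl (map_one _)
  · exact .inr (by rw [map_neg, map_one])

end Matrix

end IsInvolutionProduct

theorem one_add_smul_add_sq_mul_eq_one {R S : Type*} [CommRing R] [Ring S] [Algebra R S] {m : S}
    (hm : m ^ 3 = 0) (c : R) :
    (1 + c • (m + m ^ 2)) * (1 - c • (m + m ^ 2) + c ^ 2 • m ^ 2) = 1 := by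
  have hm4 : m ^ 4 = 0 := by rw [pow_succ, hm, zero_mul]
  have hsq : (m + m ^ 2) * (m + m ^ 2) = m ^ 2 :=
    calc (m + m ^ 2) * (m + m ^ 2) = m ^ 2 + 2 * m ^ 3 + m ^ 4 := by noncomm_ring
      _ = m ^ 2 := by rw [hm, hm4, mul_zero, add_zero, add_zero]
  have hmul : (m + m ^ 2) * m ^ 2 = 0 := by
    rw [add_mul, ← pow_succ', ← pow_add, hm, hm4, add_zero]
  simp only [add_mul (1 : S), mul_add, mul_sub, one_mul, mul_one, smul_mul_smul_comm,
    hsq, hmul, smul_zero]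
  module

section Matrix

variable {ι R : Type*} [Fintype ι] [DecidableEq ι] [CommRing R]

theorem mem_range_scalar_of_forall_units_conj_apply_eq_zero {C : Matrix ι ι R}
    (hC : ∀ (u : (Matrix ι ι R)ˣ) (i j : ι), i ≠ j →
      ((u : Matrix ι ι R) * C * (↑u⁻¹ : Matrix ι ι R)) i j = 0) :
    C ∈ Set.range (scalar ι) := by
  have hoff : ∀ i j, i ≠ j → C i j = 0 := fun i j hij => by simpa using hC 1 i j hij
  have hdiag : ∀ i j, i ≠ j → C i i = C j j := by
    intro i j hij
    let u : (Matrix ι ι R)ˣ :=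
      ⟨transvection i j 1, transvection i j (-1),
        by rw [transvection_mul_transvection_same _ _ hij, add_neg_cancel, transvection_zero],
        by rw [transvection_mul_transvection_same _ _ hij, neg_add_cancel, transvection_zero]⟩
    have hconj :
        (transvection i j (1 : R) * C * transvection i j (-1 : R) : Matrix ι ι R) i j = 0 :=
      hC u i j hij
    simp only [mul_transvection_apply_same, transvection_mul_apply_same, hoff i j hij,
      hoff j i hij.symm] at hconj
    linear_combination -hconj
  apply mem_range_scalar_of_commute_single
  intro i j hij
  have hCd : C = diagonal fun k => C k k := by
    ext k l
    rcases eq_or_ne k l with rfl | hkl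
    · rw [diagonal_apply_eq]
    · rw [diagonal_apply_ne _ hkl, hoff k l hkl]
  rw [hCd, commute_iff_eq]
  ext k l
  simp only [mul_diagonal, diagonal_mul, single_apply]
  split_ifs with h
  · obtain ⟨rfl, rfl⟩ := h
    rw [one_mul, mul_one, hdiag i j hij]
  · rw [zero_mul, mul_zero]

/-- The diagonal reflection negating the `k`-th coordinate. -/
def coordReflection (R : Type*) [CommRing R] (k : ι) : Matrix ι ι R :=
  1 - (2 : R) • single k k 1

theorem coordReflection_mul_self (k : ι) : coordReflection R k * coordReflection R k = 1 := by
  simp only [coordReflection, mul_sub, sub_mul, mul_smul_comm, smul_mul_assoc, mul_one, one_mul,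
    single_mul_single_same]
  module

theorem trace_coordReflection (k : ι) :
    trace (coordReflection R k) = (Fintype.card ι : R) - 2 := by
  simp [coordReflection]

theorem coordReflection_mul_single_left {j k : ι} (hjk : j ≠ k) (c : R) :
    coordReflection R k * single k j c = -(single k j c * coordReflection R k) := by
  simp only [coordReflection, sub_mul, mul_sub, smul_mul_assoc, mul_smul_comm, one_mul, mul_one,
    single_mul_single_same, single_mul_single_of_ne _ _ _ _ hjk, smul_zero, sub_zero]
  module

theorem coordReflection_mul_single_right {i k : ι} (hik : i ≠ k) (c : R) :
    coordReflection R k * single i k c = -(single i k c * coordReflection R k) := by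
  simp only [coordReflection, sub_mul, mul_sub, smul_mul_assoc, mul_smul_comm, one_mul, mul_one,
    single_mul_single_same, single_mul_single_of_ne _ _ _ _ hik.symm, smul_zero, sub_zero]
  module

theorem two_mul_trace_eq_zero_of_anticommute {D M : Matrix ι ι R} (hD : D * D = 1)
    (hDM : D * M = -(M * D)) : 2 * trace M = 0 := by
  have htrace : trace M = -trace M :=
    calc trace M = trace (D * M * D) := by rw [trace_mul_cycle, hD, one_mul]
      _ = -trace M := by rw [hDM, neg_mul, mul_assoc, hD, mul_one, trace_neg]
  linear_combination htrace

theorem exists_isInvolutionProduct_of_card_eq_two (hι : Fintype.card ι = 2) (s : R) :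
    ∃ X : Matrix ι ι R, IsInvolutionProduct X ∧ trace X = 2 * s ∧
      ∀ a b : R, det (a • 1 + b • X) = a ^ 2 + 2 * s * a * b + b ^ 2 := by
  let f : Fin 2 ≃ ι := (Fintype.equivFinOfCardEq hι).symm
  let e : Matrix (Fin 2) (Fin 2) R ≃ₐ[R] Matrix ι ι R := reindexAlgEquiv R R f
  have hX : IsInvolutionProduct !![2 * s, -1; 1, 0] :=
    ⟨!![0, 1; 1, 0], !![1, 0; 2 * s, -1], by simp [one_fin_two], by simp [one_fin_two], by simp⟩
  refine ⟨e !![2 * s, -1; 1, 0], hX.map e.toAlgHom.toRingHom.toMonoidHom, ?_, fun a b => ?_⟩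
  · calc trace (e !![2 * s, -1; 1, 0])
        = trace !![2 * s, -1; 1, 0] := Equiv.sum_comp f.symm fun i => !![2 * s, -1; 1, 0] i i
      _ = 2 * s := by rw [trace_fin_two_of, add_zero]
  · have hentries : a • (1 : Matrix (Fin 2) (Fin 2) R) + b • !![2 * s, -1; 1, 0] =
        !![a + b * (2 * s), -b; b, a] := by simp [one_fin_two]
    rw [← map_one e, ← map_smul, ← map_smul, ← map_add, det_reindexAlgEquiv, hentries,
      det_fin_two_of]
    ring

end Matrix

/-- `A` behaves like the value at `1` of a linear map that preserves products of two involutions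
and is given by `X ↦ r • (A * X)` on matrices of trace zero. The scalar `s` stands for
`trace X / card ι`, written without division because the characteristic may divide `card ι`. -/
def IsAdmissible {ι R : Type*} [Fintype ι] [DecidableEq ι] [CommRing R] (r : R)
    (A : Matrix ι ι R) : Prop :=
  ∀ X : Matrix ι ι R, IsInvolutionProduct X → ∀ s : R, trace X = s * Fintype.card ι →
    IsInvolutionProduct (A * (s • 1 + r • (X - s • 1)))

section CommRing

variable {ι R : Type*} [Fintype ι] [DecidableEq ι] [CommRing R] {r : R} {A : Matrix ι ι R}

theorem isAdmissible_map_one {T : Matrix ι ι R →ₗ[R] Matrix ι ι R}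
    (hpres : ∀ A, IsInvolutionProduct A → IsInvolutionProduct (T A))
    (P : (Matrix ι ι R)ˣ)
    (hform : ∀ X, trace X = 0 → T X = r • (T 1 * (P * X * (↑P⁻¹ : Matrix ι ι R)))) :
    IsAdmissible r (T 1) := by
  intro X hX s hs
  set Y : Matrix ι ι R := (↑P⁻¹ : Matrix ι ι R) * X * P with hY
  have hTY : IsInvolutionProduct (T Y) := hpres _ (hX.units_conj P⁻¹)
  have htrace : trace (Y - s • 1) = 0 := by
    rw [trace_sub, hY, trace_units_conj', hs, trace_smul, trace_one, smul_eq_mul, sub_self]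
  have hconj : P * (Y - s • 1) * (↑P⁻¹ : Matrix ι ι R) = X - s • 1 := by
    simp [hY, mul_sub, sub_mul, ← mul_assoc]
  have hsum : T Y = T 1 * (s • 1 + r • (X - s • 1)) := by
    calc T Y = s • T 1 + T (Y - s • 1) := by rw [← map_smul, ← map_add, add_sub_cancel]
      _ = s • T 1 + r • (T 1 * (X - s • 1)) := by rw [hform _ htrace, hconj]
      _ = T 1 * (s • 1 + r • (X - s • 1)) := by
        rw [mul_add, mul_smul_comm, mul_one, mul_smul_comm]
  rwa [← hsum]

namespace IsAdmissible

theorem isInvolutionProduct (hA : IsAdmissible r A) : IsInvolutionProduct A := by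
  simpa using hA 1 (.of_mul_self_eq_one (one_mul 1)) 1 (by rw [trace_one, one_mul])

theorem units_conj (hA : IsAdmissible r A) (u : (Matrix ι ι R)ˣ) :
    IsAdmissible r ((u : Matrix ι ι R) * A * (↑u⁻¹ : Matrix ι ι R)) := by
  intro X hX s hs
  have hX' : IsInvolutionProduct ((↑u⁻¹ : Matrix ι ι R) * X * u) :=
    hX.units_conj u⁻¹
  convert (hA _ hX' s (by rw [trace_units_conj', hs])).units_conj u using 1
  simp [mul_add, add_mul, mul_sub, sub_mul, mul_assoc]

theorem trace_mul_eq_trace_inv_mul (hA : IsAdmissible r A) {X W : Matrix ι ι R}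
    (hX : IsInvolutionProduct X) {s : R} (hs : trace X = s * Fintype.card ι)
    (hW : (s • 1 + r • (X - s • 1)) * W = 1) :
    trace (A * (s • 1 + r • (X - s • 1))) = trace (A⁻¹ * W) := by
  rw [← (hA X hX s hs).trace_inv, Matrix.mul_inv_rev, inv_eq_right_inv hW, trace_mul_comm]

theorem mul_self_eq_one_of_card_eq_two [IsDomain R] (h2 : (2 : R) ≠ 0) (hA : IsAdmissible r A)
    (hι : Fintype.card ι = 2) : r * r = 1 := by
  have hdet : ∀ s : R, (s * s * (1 - r * r) + r * r) ^ 2 = 1 := by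
    intro s
    obtain ⟨X, hX, htrX, hdetX⟩ := exists_isInvolutionProduct_of_card_eq_two hι s
    have hY := hA X hX s (by rw [htrX, hι, Nat.cast_ofNat, mul_comm])
    have hcomb : s • (1 : Matrix ι ι R) + r • (X - s • 1) = (s - r * s) • 1 + r • X := by module
    have hYsq := hY.det_mul_self
    rw [hcomb, det_mul, hdetX] at hYsq
    have hAsq := hA.isInvolutionProduct.det_mul_self
    linear_combination hYsq - (s * s * (1 - r * r) + r * r) ^ 2 * hAsq
  have hfourth : (r * r) ^ 2 = 1 := by simpa using hdet 0
  refine (sq_eq_one_iff.mp hfourth).resolve_right fun hneg => ?_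
  have htwo_cubed : (2 : R) ^ 3 = 0 := by
    have hnine := hdet r
    rw [hneg] at hnine
    linear_combination hnine
  exact pow_ne_zero 3 h2 htwo_cubed

end IsAdmissible

end CommRing

namespace IsAdmissible

variable {ι R : Type*} [Fintype ι] [DecidableEq ι] [CommRing R] [IsDomain R] {r : R}
  {A : Matrix ι ι R}

theorem trace_mul_add_sq (h2 : (2 : R) ≠ 0) (hr : r ≠ 0) (hA : IsAdmissible r A)
    {D M : Matrix ι ι R} (hD : D * D = 1) (hDM : D * M = -(M * D)) (hM : M ^ 3 = 0)
    (htr : trace (M ^ 2) = 0) :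
    trace (A * (M + M ^ 2)) + trace (A⁻¹ * (M + M ^ 2)) = 2 * r * trace (A⁻¹ * M ^ 2) := by
  have hX : IsInvolutionProduct (1 + 2 * (M + M ^ 2)) := .cayley hD hDM hM
  have htrX : trace (1 + 2 * (M + M ^ 2) : Matrix ι ι R) = 1 * Fintype.card ι := by
    have htrM : 2 * trace M = 0 := two_mul_trace_eq_zero_of_anticommute hD hDM
    rw [two_mul, trace_add, trace_add, trace_add, trace_one, htr]
    linear_combination htrM
  have hY : (1 : R) • (1 : Matrix ι ι R) + r • (1 + 2 * (M + M ^ 2) - (1 : R) • 1) =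
      1 + (2 * r) • (M + M ^ 2) := by
    rw [two_mul]; module
  have htrace := hA.trace_mul_eq_trace_inv_mul hX htrX
    (hY ▸ one_add_smul_add_sq_mul_eq_one hM (2 * r))
  rw [hY] at htrace
  simp only [mul_add, mul_sub, mul_one, mul_smul_comm, trace_add, trace_sub, trace_smul,
    smul_eq_mul, hA.isInvolutionProduct.trace_inv] at htrace ⊢
  apply mul_left_cancel₀ (mul_ne_zero h2 hr)
  linear_combination htrace

theorem apply_add_inv_apply_eq_zero (h2 : (2 : R) ≠ 0) (hr : r ≠ 0) (hA : IsAdmissible r A)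
    {i j : ι} (hij : i ≠ j) : A i j + A⁻¹ i j = 0 := by
  have hsq : single j i (1 : R) ^ 2 = 0 := by rw [pow_two, single_mul_single_of_ne _ _ _ _ hij]
  have htrace := hA.trace_mul_add_sq h2 hr (coordReflection_mul_self j)
    (coordReflection_mul_single_left hij 1) (by rw [pow_succ, hsq, zero_mul])
    (by rw [hsq, trace_zero])
  simpa [hsq, trace_mul_single] using htrace

-- `M` is chosen with `M ^ 2 = single j i 1`. As `-M` qualifies as well, the terms linear in `M`
-- can be eliminated, leaving a relation between the entries of `A` and `A⁻¹` that involves `r`.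
theorem inv_apply_eq_zero (h2 : (2 : R) ≠ 0) (hr : r ≠ 0) (hA : IsAdmissible r A)
    {i j k : ι} (hij : i ≠ j) (hki : k ≠ i) (hkj : k ≠ j) : A⁻¹ i j = 0 := by
  set M : Matrix ι ι R := single j k 1 + single k i 1 with hM
  have hsq : M ^ 2 = single j i 1 := by
    simp [hM, pow_two, mul_add, add_mul, hkj, hij, hki.symm]
  have hcube : M ^ 3 = 0 := by
    rw [pow_succ, hsq]
    simp [hM, mul_add, hij, hki.symm]
  have hDM : coordReflection R k * M = -(M * coordReflection R k) := by
    rw [hM, mul_add, add_mul, coordReflection_mul_single_right hkj.symm,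
      coordReflection_mul_single_left hki.symm, neg_add]
  have htr : trace (M ^ 2) = 0 := by rw [hsq, trace_single_eq_of_ne _ _ _ hij.symm]
  have hpos := hA.trace_mul_add_sq h2 hr (coordReflection_mul_self k) hDM hcube htr
  have hneg := hA.trace_mul_add_sq h2 hr (M := -M) (coordReflection_mul_self k)
    (by rw [mul_neg, neg_mul, hDM]) (by rw [Odd.neg_pow (by decide), hcube, neg_zero])
    (by rw [neg_sq, htr])
  rw [neg_sq] at hneg
  simp only [mul_add, mul_neg, trace_add, trace_neg, hsq, trace_mul_single,
    MulOpposite.op_one, one_smul] at hpos hneg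
  have hsum := hA.apply_add_inv_apply_eq_zero h2 hr hij
  have hmul : (2 * 2 * r) * A⁻¹ i j = 0 := by
    linear_combination 2 * hsum - hpos - hneg
  exact (mul_eq_zero.mp hmul).resolve_left (mul_ne_zero (mul_ne_zero h2 h2) hr)

theorem add_inv_mem_range_scalar (h2 : (2 : R) ≠ 0) (hr : r ≠ 0) (hA : IsAdmissible r A) :
    A + A⁻¹ ∈ Set.range (scalar ι) := by
  apply mem_range_scalar_of_forall_units_conj_apply_eq_zero
  intro u i j hij
  have hinv : ((u : Matrix ι ι R) * A * (↑u⁻¹ : Matrix ι ι R))⁻¹ =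
      (u : Matrix ι ι R) * A⁻¹ * (↑u⁻¹ : Matrix ι ι R) := by
    simp [Matrix.mul_inv_rev, mul_assoc]
  rw [mul_add, add_mul, ← hinv]
  exact (hA.units_conj u).apply_add_inv_apply_eq_zero h2 hr hij

theorem trace_mul_eq_zero_of_card_eq_two (h2 : (2 : R) ≠ 0) (hr : r ≠ 0) (hA : IsAdmissible r A)
    (hι : Fintype.card ι = 2) {J : Matrix ι ι R} (hJ : J * J = 1) (htr : trace J = 0) :
    trace (A * J) = 0 := by
  obtain ⟨c, hc⟩ := hA.add_inv_mem_range_scalar h2 hr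
  have hneg : trace (A * J) + trace (A⁻¹ * J) = 0 := by
    rw [← trace_add, ← add_mul, ← hc, scalar_apply, ← smul_one_eq_diagonal, smul_mul_assoc,
      one_mul, trace_smul, htr, smul_zero]
  have hY : (0 : R) • (1 : Matrix ι ι R) + r • (J - (0 : R) • 1) = r • J := by simp
  have hinv : (r • J) * (r • J) = 1 := by
    rw [smul_mul_smul_comm, hJ, hA.mul_self_eq_one_of_card_eq_two h2 hι, one_smul]
  have htrace := hA.trace_mul_eq_trace_inv_mul (.of_mul_self_eq_one hJ)
    (s := 0) (by rw [htr, zero_mul]) (hY ▸ hinv)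
  rw [hY, mul_smul_comm, mul_smul_comm, trace_smul, trace_smul, smul_eq_mul, smul_eq_mul] at htrace
  apply mul_left_cancel₀ (mul_ne_zero h2 hr)
  linear_combination htrace + r * hneg

theorem apply_eq_zero_of_card_eq_two (h2 : (2 : R) ≠ 0) (hr : r ≠ 0) (hA : IsAdmissible r A)
    (hι : Fintype.card ι = 2) {i j : ι} (hij : i ≠ j) : A i j = 0 := by
  set D := coordReflection R j with hD
  set E : Matrix ι ι R := single j i 1 with hE
  have hDD : D * D = 1 := coordReflection_mul_self j
  have hDE : D * E = -(E * D) := coordReflection_mul_single_left hij 1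
  have hEE : E * E = 0 := by rw [hE, single_mul_single_of_ne _ _ _ _ hij]
  have hDE_sq : (D + E) * (D + E) = 1 := by
    rw [add_mul, mul_add, mul_add, hDD, hDE, hEE]; abel
  have htrD : trace D = 0 := by rw [hD, trace_coordReflection, hι, Nat.cast_ofNat, sub_self]
  have htrE : trace E = 0 := trace_single_eq_of_ne _ _ _ hij.symm
  have hAD := hA.trace_mul_eq_zero_of_card_eq_two h2 hr hι hDD htrD
  have hADE := hA.trace_mul_eq_zero_of_card_eq_two h2 hr hι hDE_sq
    (by rw [trace_add, htrD, htrE, add_zero])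
  simpa [mul_add, hAD, hE, trace_mul_single] using hADE

theorem apply_eq_zero (h2 : (2 : R) ≠ 0) (hr : r ≠ 0) (hA : IsAdmissible r A) {i j : ι}
    (hij : i ≠ j) : A i j = 0 := by
  by_cases hk : ∃ k, k ≠ i ∧ k ≠ j
  · obtain ⟨k, hki, hkj⟩ := hk
    have hsum := hA.apply_add_inv_apply_eq_zero h2 hr hij
    rwa [hA.inv_apply_eq_zero h2 hr hij hki hkj, add_zero] at hsum
  · have huniv : ({i, j} : Finset ι) = Finset.univ := by
      ext k
      push Not at hk
      simpa [or_iff_not_imp_left] using hk k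
    apply hA.apply_eq_zero_of_card_eq_two h2 hr _ hij
    rw [← Finset.card_univ, ← huniv, Finset.card_pair hij]

theorem mem_range_scalar (h2 : (2 : R) ≠ 0) (hr : r ≠ 0) (hA : IsAdmissible r A) :
    A ∈ Set.range (scalar ι) :=
  mem_range_scalar_of_forall_units_conj_apply_eq_zero fun u _ _ hij =>
    (hA.units_conj u).apply_eq_zero h2 hr hij

end IsAdmissible

theorem stmt7_general {ι R : Type*} [Fintype ι] [DecidableEq ι] [CommRing R] [IsDomain R]
    (hchar : ringChar R ≠ 2) (T : Matrix ι ι R →ₗ[R] Matrix ι ι R)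
    (hpres : ∀ A, IsInvolutionProduct A → IsInvolutionProduct (T A))
    (r : R) (hr : r ≠ 0) (P : Matrix ι ι R) (hP : IsUnit P)
    (hform : (∀ X, trace X = 0 → T X = r • (T 1 * (P * X * P⁻¹))) ∨
             (∀ X, trace X = 0 → T X = r • (T 1 * (P * Xᵀ * P⁻¹)))) :
    T 1 = 1 ∨ T 1 = -1 := by
  obtain ⟨u, rfl⟩ := hP
  rw [← coe_units_inv] at hform
  have hadm : IsAdmissible r (T 1) := by
    rcases hform with hconj | hanti
    · exact isAdmissible_map_one hpres u hconj
    · let T' := T ∘ₗ (transposeLinearEquiv ι ι R R).toLinearMap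
      have hT'1 : T' 1 = T 1 := congrArg T transpose_one
      rw [← hT'1]
      refine isAdmissible_map_one (fun A hA => hpres Aᵀ hA.transpose) u fun X hX => ?_
      rw [hT'1]
      simpa [T'] using hanti Xᵀ (by rwa [trace_transpose])
  exact hadm.isInvolutionProduct.eq_one_or_eq_neg_one_of_scalar
    (hadm.mem_range_scalar (Ring.two_ne_zero hchar) hr)

theorem stmt7 (F : Type*) [Field F] (hchar : ringChar F ≠ 2) (n : ℕ) (hn : 2 ≤ n)
    (T : Matrix (Fin n) (Fin n) F →ₗ[F] Matrix (Fin n) (Fin n) F)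
    (hT : Function.Bijective T)
    (hpres : ∀ A ∈ ProdInv2 F n, T A ∈ ProdInv2 F n)
    (r : F) (hr : r ≠ 0) (P : Matrix (Fin n) (Fin n) F) (hP : IsUnit P)
    (hform : (∀ X, Matrix.trace X = 0 → T X = r • (T 1 * (P * X * P⁻¹))) ∨
             (∀ X, Matrix.trace X = 0 → T X = r • (T 1 * (P * Xᵀ * P⁻¹)))) :
    T 1 = 1 ∨ T 1 = -1 :=
  stmt7_general hchar T hpres r hr P hP hform
end

section
/- Let F be a field with more than n elements. Then a matrix N ∈ M_n(F) is nilpotent if and only if det(I + tN) = 1 for all t ∈ F. -/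
open Matrix

/-!
As a function of `t`, `det (1 + t • M)` is the reversed characteristic polynomial of `-M`, whose
degree is at most the size of `M`. Over a domain, it is therefore `1` at more points than this size
exactly when the reversed polynomial is `1`, that is, when the characteristic polynomial of `-M` is
a power of `X`. By the Cayley–Hamilton theorem, the latter forces `-M` to be nilpotent; conversely,
the lower coefficients of the characteristic polynomial of a nilpotent matrix are nilpotent, hence
zero.
-/

section Polynomial

open Polynomial

lemma eq_of_natDegree_le_of_eval_eq_on {R : Type*} [CommRing R] [IsDomain R] {p q : R[X]} {n : ℕ}
    {S : Set R} (hp : p.natDegree ≤ n) (hq : q.natDegree ≤ n) (hS : (n : Cardinal) < Cardinal.mk S)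
    (heval : ∀ t ∈ S, p.eval t = q.eval t) : p = q := by
  obtain ⟨s, hs⟩ : ∃ s : Finset S, n + 1 ≤ s.card :=
    Cardinal.exists_finset_le_card S (n + 1) (by exact_mod_cast Cardinal.add_one_le_of_lt hS)
  have hinj : Function.Injective fun t : s ↦ (t : R) :=
    Subtype.val_injective.comp Subtype.val_injective
  refine eq_of_natDegree_lt_card_of_eval_eq p q hinj (fun t ↦ heval _ t.1.2) ?_
  rw [Fintype.card_coe]
  lia

end Polynomial

section CharpolyRev

open Polynomial

variable {R ι : Type*} [CommRing R] [Fintype ι] [DecidableEq ι] (M : Matrix ι ι R)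

lemma eval_charpolyRev_eq_det (t : R) : M.charpolyRev.eval t = (1 - t • M).det := by
  rw [charpolyRev, ← coe_evalRingHom, RingHom.map_det]
  congr 1
  ext i j
  simp [one_apply, apply_ite (eval t), mul_comm t]

lemma natDegree_charpolyRev_le : M.charpolyRev.natDegree ≤ Fintype.card ι := by
  nontriviality R
  rw [← reverse_charpoly, ← M.charpoly_natDegree_eq_dim]
  exact reverse_natDegree_le _

lemma charpolyRev_eq_one_iff :
    M.charpolyRev = 1 ↔ M.charpoly = X ^ Fintype.card ι := by
  nontriviality R
  refine ⟨fun h ↦ ?_, fun h ↦ ?_⟩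
  · have hdegree : M.charpoly.natDegree - M.charpoly.natTrailingDegree = 0 := by
      rw [← reverse_natDegree, reverse_charpoly, h, natDegree_one]
    rw [← M.charpoly_natDegree_eq_dim]
    exact M.charpoly_monic.eq_X_pow_iff_natDegree_le_natTrailingDegree.mpr
      (Nat.sub_eq_zero_iff_le.mp hdegree)
  · rw [← reverse_charpoly, h, ← one_mul (X ^ _), reverse_mul_X_pow, ← C_1, reverse_C]

lemma isNilpotent_iff_charpoly_eq_X_pow [IsReduced R] :
    IsNilpotent M ↔ M.charpoly = X ^ Fintype.card ι := by
  refine ⟨fun h ↦ ?_, fun h ↦ ⟨Fintype.card ι, ?_⟩⟩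
  · ext k
    have hcoeff := Polynomial.isNilpotent_iff.mp (isNilpotent_charpoly_sub_pow_of_isNilpotent h) k
    simpa only [coeff_sub, sub_eq_zero] using hcoeff.eq_zero
  · simpa [h] using M.aeval_self_charpoly

end CharpolyRev

theorem stmt8_general {R ι : Type*} [CommRing R] [IsDomain R] [Fintype ι] [DecidableEq ι]
    {S : Set R} (hS : (Fintype.card ι : Cardinal) < Cardinal.mk S) (M : Matrix ι ι R) :
    IsNilpotent M ↔ ∀ t ∈ S, (1 + t • M).det = 1 := by
  have heval (t : R) : (-M).charpolyRev.eval t = (1 + t • M).det := by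
    rw [eval_charpolyRev_eq_det, smul_neg, sub_neg_eq_add]
  rw [← isNilpotent_neg_iff, isNilpotent_iff_charpoly_eq_X_pow, ← charpolyRev_eq_one_iff]
  refine ⟨fun h t _ ↦ by rw [← heval, h, Polynomial.eval_one], fun h ↦ ?_⟩
  refine eq_of_natDegree_le_of_eval_eq_on (natDegree_charpolyRev_le _) ?_ hS fun t ht ↦ ?_
  · simp only [Polynomial.natDegree_one, zero_le]
  · rw [heval, h t ht, Polynomial.eval_one]

theorem stmt8 (F : Type*) [Field F] (n : ℕ) (hF : (n : Cardinal) < Cardinal.mk F)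
    (N : Matrix (Fin n) (Fin n) F) :
    IsNilpotent N ↔ ∀ t : F, (1 + t • N).det = 1 := by
  simpa using stmt8_general (S := Set.univ) (by simpa using hF) N
end

section
/- Let F be a field with more than 2n elements, let S_n be any one of the sets B_n, C_n, D_n, and let T : M_n(F) → M_n(F) be a bijective linear map such that T(S_n) ⊆ S_n. Then T(I) is invertible and T(I)⁻¹·T(N) is nilpotent for every nilpotent matrix N ∈ M_n(F). -/
open Matrix

/-- The set of matrices that are products of three involutions. -/
def ProdInv3 (F : Type*) [Field F] (n : ℕ) : Set (Matrix (Fin n) (Fin n) F) :=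
  {A | ∃ J₁ J₂ J₃ : Matrix (Fin n) (Fin n) F,
    J₁ * J₁ = 1 ∧ J₂ * J₂ = 1 ∧ J₃ * J₃ = 1 ∧ A = J₁ * J₂ * J₃}

/- Write `N` as multiplication by `X` on a direct sum of cyclic modules `F[X] / (X ^ k)`. On each of
them `1 + X` is inverted by the involutive automorphism `X ↦ (1 + X)⁻¹ - 1`, and an element inverted
by an involution is a product of two involutions. Hence `1 + t N` is such a product for every `t`,
so `det (T 1 + t T N) ^ 2 = 1`. Since `F` has more than `2 n` elements, the square of the polynomial
`det (1 - t (T 1)⁻¹ T N)` in `t` is constant. This polynomial is the reverse of the characteristic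
polynomial of `(T 1)⁻¹ T N`, which is therefore a power of `X`. -/

open Polynomial

section ProdTwoInvolutions

/-- Products of two involutions in an arbitrary monoid. This makes the notion behind `ProdInv2`
available for linear endomorphisms; as in `ProdInv2`, the identity counts as an involution. -/
def IsProdTwoInvolutions {M : Type*} [Monoid M] (u : M) : Prop :=
  ∃ s t : M, s * s = 1 ∧ t * t = 1 ∧ u = s * t

theorem IsProdTwoInvolutions.map {M N G : Type*} [Monoid M] [Monoid N] [FunLike G M N]
    [MonoidHomClass G M N] {u : M} (hu : IsProdTwoInvolutions u) (f : G) :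
    IsProdTwoInvolutions (f u) := by
  obtain ⟨s, t, hs, ht, rfl⟩ := hu
  exact ⟨f s, f t, by rw [← map_mul, hs, map_one], by rw [← map_mul, ht, map_one], map_mul f s t⟩

theorem isProdTwoInvolutions_of_mul_mul_self_eq_one {M : Type*} [Monoid M] {u s : M}
    (hs : s * s = 1) (hu : u * s * (u * s) = 1) : IsProdTwoInvolutions u :=
  ⟨u * s, s, hu, hs, by rw [mul_assoc, hs, mul_one]⟩

section Module

variable {R A : Type*} [CommSemiring R] [Semiring A] [Algebra R A]

theorem IsProdTwoInvolutions.lsmul_congr {M N : Type*} [AddCommMonoid M] [Module R M] [Module A M]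
    [IsScalarTower R A M] [AddCommMonoid N] [Module R N] [Module A N] [IsScalarTower R A N]
    {a : A} (h : IsProdTwoInvolutions (Algebra.lsmul R R M a)) (e : M ≃ₗ[A] N) :
    IsProdTwoInvolutions (Algebra.lsmul R R N a) := by
  have hconj : (e.restrictScalars R).conjRingEquiv (Algebra.lsmul R R M a) =
      Algebra.lsmul R R N a := by
    ext y
    simp
  exact hconj ▸ h.map _

theorem IsProdTwoInvolutions.lsmul_pi {ι : Type*} {M : ι → Type*} [∀ i, AddCommMonoid (M i)]
    [∀ i, Module R (M i)] [∀ i, Module A (M i)] [∀ i, IsScalarTower R A (M i)] {a : A}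
    (h : ∀ i, IsProdTwoInvolutions (Algebra.lsmul R R (M i) a)) :
    IsProdTwoInvolutions (Algebra.lsmul R R (∀ i, M i) a) := by
  choose s t hs ht ha using h
  refine ⟨LinearMap.piMap s, LinearMap.piMap t, ?_, ?_, ?_⟩ <;>
    refine LinearMap.ext fun m => funext fun i => ?_
  · exact LinearMap.congr_fun (hs i) (m i)
  · exact LinearMap.congr_fun (ht i) (m i)
  · exact LinearMap.congr_fun (ha i) (m i)

theorem isProdTwoInvolutions_lmul_of_mul_map_eq_one {σ : A →ₐ[R] A}
    (hσ : Function.Involutive σ) {u : A} (hu : u * σ u = 1) :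
    IsProdTwoInvolutions (Algebra.lmul R A u) := by
  refine isProdTwoInvolutions_of_mul_mul_self_eq_one (s := σ.toLinearMap) ?_ ?_ <;>
    refine LinearMap.ext fun a => ?_
  · exact hσ a
  · calc u * σ (u * σ a) = u * σ u * σ (σ a) := by rw [map_mul, mul_assoc]
      _ = a := by rw [hu, hσ a, one_mul]

end Module

theorem exists_involutive_algHom_quotient_span_X_pow (R : Type*) [CommRing R] (k : ℕ) :
    ∃ σ : (R[X] ⧸ Ideal.span {(X : R[X]) ^ k}) →ₐ[R] R[X] ⧸ Ideal.span {(X : R[X]) ^ k},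
      Function.Involutive σ ∧
        Ideal.Quotient.mk _ (1 + X) * σ (Ideal.Quotient.mk _ (1 + X)) = 1 := by
  set I : Ideal R[X] := Ideal.span {X ^ k}
  set x : R[X] ⧸ I := Ideal.Quotient.mk I X with hx
  have hxk : x ^ k = 0 := by
    rw [hx, ← map_pow, Ideal.Quotient.eq_zero_iff_mem]
    exact Ideal.mem_span_singleton_self _
  obtain ⟨v, hv⟩ : ∃ v, (1 + x) * v = 1 := (IsNilpotent.isUnit_one_add ⟨k, hxk⟩).exists_right_inv
  have hvk : (v - 1) ^ k = 0 := by
    rw [show v - 1 = x * -v by linear_combination hv, mul_pow, hxk, zero_mul]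
  let σ : (R[X] ⧸ I) →ₐ[R] R[X] ⧸ I := Ideal.Quotient.liftₐ I (aeval (v - 1)) fun p hp => by
    obtain ⟨q, rfl⟩ := Ideal.mem_span_singleton.1 hp
    rw [map_mul, map_pow, aeval_X, hvk, zero_mul]
  have hσx : σ x = v - 1 := aeval_X (v - 1)
  have hσu : σ (1 + x) = v := by rw [map_add, map_one, hσx, add_sub_cancel]
  have hσv : σ v = 1 + x := by
    have hinv : v * σ v = 1 := by rw [← hσu, ← map_mul, hσu, hv, map_one]
    exact (left_inv_eq_right_inv hv hinv).symm
  have hσσ : σ.comp σ = AlgHom.id R _ := by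
    refine Ideal.Quotient.algHom_ext _ (Polynomial.algHom_ext ?_)
    change σ (σ x) = x
    rw [hσx, map_sub, map_one, hσv, add_sub_cancel_left]
  refine ⟨σ, DFunLike.congr_fun hσσ, ?_⟩
  rw [map_add, map_one, hσu, hv]

theorem isProdTwoInvolutions_lsmul_one_add_X_quotient_span_X_pow (R : Type*) [CommRing R] (k : ℕ) :
    IsProdTwoInvolutions
      (Algebra.lsmul R R (R[X] ⧸ Ideal.span {(X : R[X]) ^ k}) (1 + X : R[X])) := by
  obtain ⟨σ, hσ, hu⟩ := exists_involutive_algHom_quotient_span_X_pow R k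
  have hlmul : Algebra.lsmul R R (R[X] ⧸ Ideal.span {(X : R[X]) ^ k}) (1 + X : R[X]) =
      Algebra.lmul R _ (Ideal.Quotient.mk _ (1 + X)) :=
    LinearMap.ext fun a => Algebra.smul_def (1 + X : R[X]) a
  exact hlmul ▸ isProdTwoInvolutions_lmul_of_mul_map_eq_one hσ hu

variable {F : Type*} [Field F]

theorem isProdTwoInvolutions_lsmul_one_add_X {M : Type*} [AddCommGroup M] [Module F M]
    [Module F[X] M] [IsScalarTower F F[X] M] [Module.Finite F[X] M]
    (hM : Module.IsTorsion' M (Submonoid.powers (X : F[X]))) :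
    IsProdTwoInvolutions (Algebra.lsmul F F M (1 + X : F[X])) := by
  obtain ⟨d, k, ⟨e⟩⟩ := Module.torsion_by_prime_power_decomposition irreducible_X hM
  have hpi : IsProdTwoInvolutions (Algebra.lsmul F F
      (∀ i : Fin d, F[X] ⧸ Submodule.span F[X] {(X : F[X]) ^ k i}) (1 + X : F[X])) :=
    .lsmul_pi fun i => isProdTwoInvolutions_lsmul_one_add_X_quotient_span_X_pow F (k i)
  exact hpi.lsmul_congr (e.trans (DirectSum.linearEquivFunOnFintype F[X] (Fin d) _)).symm

theorem isProdTwoInvolutions_one_add_of_isNilpotent {V : Type*} [AddCommGroup V] [Module F V]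
    [Module.Finite F V] {f : Module.End F V} (hf : IsNilpotent f) :
    IsProdTwoInvolutions (1 + f) := by
  obtain ⟨m, hm⟩ := hf
  have : Module.Finite F[X] (Module.AEval' f) := .of_restrictScalars_finite F F[X] _
  have htors : Module.IsTorsion' (Module.AEval' f) (Submonoid.powers (X : F[X])) := fun {y} => by
    refine ⟨⟨X ^ m, m, rfl⟩, ?_⟩
    obtain ⟨v, rfl⟩ := (Module.AEval'.of f).surjective y
    change (X ^ m : F[X]) • Module.AEval'.of f v = 0
    rw [Module.AEval'.X_pow_smul_of, hm, zero_smul, map_zero]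
  have hconj : (Module.AEval'.of f).symm.conjRingEquiv
      (Algebra.lsmul F F (Module.AEval' f) (1 + X : F[X])) = 1 + f := by
    ext v
    simp [Module.AEval'.X_smul_of]
  exact hconj ▸ (isProdTwoInvolutions_lsmul_one_add_X htors).map _

end ProdTwoInvolutions

section ProdInv

variable {F : Type*} [Field F] {n : ℕ}

theorem one_add_mem_prodInv2 {N : Matrix (Fin n) (Fin n) F} (hN : IsNilpotent N) :
    1 + N ∈ ProdInv2 F n := by
  have hconj : toLinAlgEquiv'.symm (1 + toLinAlgEquiv' N) = 1 + N := by simp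
  exact hconj ▸
    (isProdTwoInvolutions_one_add_of_isNilpotent (hN.map toLinAlgEquiv')).map toLinAlgEquiv'.symm

theorem prodInv2_subset_prodInv3 : ProdInv2 F n ⊆ ProdInv3 F n := by
  rintro _ ⟨J₁, J₂, h₁, h₂, rfl⟩
  exact ⟨J₁, J₂, 1, h₁, h₂, mul_one 1, (mul_one _).symm⟩

theorem prodInv3_subset_prodInv4 : ProdInv3 F n ⊆ ProdInv4 F n := by
  rintro _ ⟨J₁, J₂, J₃, h₁, h₂, h₃, rfl⟩
  exact ⟨J₁, J₂, J₃, 1, h₁, h₂, h₃, mul_one 1, (mul_one _).symm⟩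

theorem prodInv2_subset_and_subset_prodInv4 {S : Set (Matrix (Fin n) (Fin n) F)}
    (hS : S = ProdInv2 F n ∨ S = ProdInv3 F n ∨ S = ProdInv4 F n) :
    ProdInv2 F n ⊆ S ∧ S ⊆ ProdInv4 F n := by
  have h₂₃ : ProdInv2 F n ⊆ ProdInv3 F n := prodInv2_subset_prodInv3
  have h₃₄ : ProdInv3 F n ⊆ ProdInv4 F n := prodInv3_subset_prodInv4
  rcases hS with rfl | rfl | rfl
  · exact ⟨subset_rfl, h₂₃.trans h₃₄⟩
  · exact ⟨h₂₃, h₃₄⟩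
  · exact ⟨h₂₃.trans h₃₄, subset_rfl⟩

theorem det_sq_eq_one_of_mem_prodInv4 {A : Matrix (Fin n) (Fin n) F} (hA : A ∈ ProdInv4 F n) :
    A.det ^ 2 = 1 := by
  have hdet {J : Matrix (Fin n) (Fin n) F} (hJ : J * J = 1) : J.det ^ 2 = 1 := by
    rw [sq, ← det_mul, hJ, det_one]
  obtain ⟨J₁, J₂, J₃, J₄, h₁, h₂, h₃, h₄, rfl⟩ := hA
  simp only [det_mul, mul_pow, hdet h₁, hdet h₂, hdet h₃, hdet h₄, mul_one]

end ProdInv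

section Nilpotent

variable {R ι : Type*} [CommRing R] [Fintype ι] [DecidableEq ι]

theorem natDegree_charpolyRev_le_s9 (Y : Matrix ι ι R) :
    Y.charpolyRev.natDegree ≤ Fintype.card ι := by
  nontriviality R
  rw [← reverse_charpoly, ← charpoly_natDegree_eq_dim Y]
  exact reverse_natDegree_le _

theorem eval_charpolyRev_eq_det_s9 (Y : Matrix ι ι R) (t : R) :
    Y.charpolyRev.eval t = (1 - t • Y).det := by
  rw [charpolyRev, eval_det]
  simp [smul_eq_mul_diagonal]

variable [IsDomain R] {Y : Matrix ι ι R}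

theorem isNilpotent_of_isUnit_charpolyRev (hY : IsUnit Y.charpolyRev) : IsNilpotent Y := by
  have hdeg : Y.charpoly.natTrailingDegree = Y.charpoly.natDegree := by
    refine le_antisymm (natTrailingDegree_le_natDegree _) (Nat.sub_eq_zero_iff_le.1 ?_)
    rw [← reverse_natDegree, reverse_charpoly, natDegree_eq_zero_of_isUnit hY]
  have hpow : Y.charpoly = X ^ Y.charpoly.natDegree :=
    Y.charpoly_monic.eq_X_pow_iff_natTrailingDegree_eq_natDegree.2 hdeg
  refine ⟨Y.charpoly.natDegree, ?_⟩
  rw [← aeval_X_pow (R := R) Y, ← hpow, aeval_self_charpoly]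

theorem isNilpotent_of_det_one_sub_smul_pow_eq_one {k : ℕ} (hk : k ≠ 0)
    (hR : ((k * Fintype.card ι : ℕ) : Cardinal) < Cardinal.mk R)
    (hY : ∀ t : R, (1 - t • Y).det ^ k = 1) : IsNilpotent Y := by
  have hdeg : (Y.charpolyRev ^ k - 1).natDegree ≤ k * Fintype.card ι := by
    rw [← C_1, natDegree_sub_C]
    exact natDegree_pow_le_of_le k (natDegree_charpolyRev_le_s9 Y)
  have hpow : Y.charpolyRev ^ k - 1 = 0 := by
    refine eq_zero_of_forall_eval_zero_of_natDegree_lt_card _ (fun t => ?_)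
      (lt_of_le_of_lt (by exact_mod_cast hdeg) hR)
    rw [eval_sub, eval_pow, eval_charpolyRev_eq_det_s9, hY, eval_one, sub_self]
  exact isNilpotent_of_isUnit_charpolyRev (.of_pow_eq_one (sub_eq_zero.1 hpow) hk)

end Nilpotent

theorem stmt9_general {F : Type*} [Field F] {n m : ℕ}
    (hF : ((2 * m : ℕ) : Cardinal) < Cardinal.mk F)
    (T : Matrix (Fin n) (Fin n) F →ₗ[F] Matrix (Fin m) (Fin m) F)
    (hT : ∀ A ∈ ProdInv2 F n, T A ∈ ProdInv4 F m) :
    IsUnit (T 1) ∧ ∀ N : Matrix (Fin n) (Fin n) F, IsNilpotent N →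
      IsNilpotent ((T 1)⁻¹ * T N) := by
  have hdet {N : Matrix (Fin n) (Fin n) F} (hN : IsNilpotent N) : (T (1 + N)).det ^ 2 = 1 :=
    det_sq_eq_one_of_mem_prodInv4 (hT _ (one_add_mem_prodInv2 hN))
  have hdet_one : (T 1).det ^ 2 = 1 := by simpa only [add_zero] using hdet .zero
  have hunit : IsUnit (T 1).det := .of_pow_eq_one hdet_one two_ne_zero
  refine ⟨(isUnit_iff_isUnit_det _).2 hunit, fun N hN => ?_⟩
  refine isNilpotent_of_det_one_sub_smul_pow_eq_one two_ne_zero (by rwa [Fintype.card_fin])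
    fun t => ?_
  have hfactor : T 1 * (1 - t • ((T 1)⁻¹ * T N)) = T (1 + -(t • N)) := by
    rw [mul_sub, mul_one, mul_smul_comm, mul_nonsing_inv_cancel_left _ _ hunit, ← map_smul,
      ← map_sub, sub_eq_add_neg]
  calc (1 - t • ((T 1)⁻¹ * T N)).det ^ 2
      = (T 1 * (1 - t • ((T 1)⁻¹ * T N))).det ^ 2 := by rw [det_mul, mul_pow, hdet_one, one_mul]
    _ = 1 := by rw [hfactor, hdet (hN.smul t).neg]

theorem stmt9 (F : Type*) [Field F] (n : ℕ)
    (hF : ((2 * n : ℕ) : Cardinal) < Cardinal.mk F)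
    (S : Set (Matrix (Fin n) (Fin n) F))
    (hS : S = ProdInv2 F n ∨ S = ProdInv3 F n ∨ S = ProdInv4 F n)
    (T : Matrix (Fin n) (Fin n) F →ₗ[F] Matrix (Fin n) (Fin n) F)
    (hT : Function.Bijective T) (hpres : ∀ A ∈ S, T A ∈ S) :
    IsUnit (T 1) ∧ ∀ N : Matrix (Fin n) (Fin n) F, IsNilpotent N →
      IsNilpotent ((T 1)⁻¹ * T N) := by
  obtain ⟨hS₂, hS₄⟩ := prodInv2_subset_and_subset_prodInv4 hS
  exact stmt9_general hF T fun A hA => hS₄ (hpres A (hS₂ hA))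
end
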